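/- Let C be a commutative Noetherian ring with Krull dimension D < ∞ and let A = C[x_1,…,x_n]. Then for every r ≥ max(3, D+2), every matrix g in the odd split orthogonal group O(2r+1, A) can be reduced, by multiplying from the left by at most N = n(12r−8) + (nD + r(r−1)/2)·(r(r−1)/2 + ⌈(r−1)/2⌉ + 9r−2) + 11r−9 elementary orthogonal transvections, to a matrix of block-diagonal shape diag(1, β, 1) with β in O(2r−1, A) (β occupying the rows/columns indexed 2,…,r,0,−r,…,−2). -/

import Mathlib

open Matrix

section OddDefs

variable {R : Type*} [CommRing R]

/-- Position of the middle basis vector `e_0` in the basis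
`e_1,…,e_r,e_0,e_{-r},…,e_{-1}` of `R^{2r+1}`. -/
def midO (r : ℕ) : Fin (2 * r + 1) := ⟨r, by omega⟩

/-- Position of `e_{-i}` given the position of `e_i` (odd case); fixes the middle position. -/
def negO (r : ℕ) (i : Fin (2 * r + 1)) : Fin (2 * r + 1) := ⟨2 * r - i.val, by omega⟩

/-- The split quadratic form `q(x) = x_0^2 + ∑_{i=1}^r x_i x_{-i}` on `R^{2r+1}`. -/
def quadO (r : ℕ) (x : Fin (2 * r + 1) → R) : R :=
  x (midO r) * x (midO r) + ∑ i : Fin r, x ⟨i.val, by omega⟩ * x ⟨2 * r - i.val, by omega⟩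

/-- The odd split orthogonal group `O(2r+1,R)`, as a set of matrices. -/
def OO (r : ℕ) (R : Type*) [CommRing R] : Set (Matrix (Fin (2 * r + 1)) (Fin (2 * r + 1)) R) :=
  {g | IsUnit g ∧ ∀ x : Fin (2 * r + 1) → R, quadO r (g.mulVec x) = quadO r x}

/-- Long root elementary transvection `T_{i,j}(ξ) = e + ξ e_{i,j} - ξ e_{-j,-i}` (odd case). -/
def TOlong (r : ℕ) (i j : Fin (2 * r + 1)) (ξ : R) :
    Matrix (Fin (2 * r + 1)) (Fin (2 * r + 1)) R :=
  1 + ξ • Matrix.single i j 1 - ξ • Matrix.single (negO r j) (negO r i) 1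

/-- Short root elementary transvection
`T_{i,0}(ξ) = e + 2ξ e_{i,0} - ξ e_{0,-i} - ξ² e_{i,-i}`. -/
def TOshort (r : ℕ) (i : Fin (2 * r + 1)) (ξ : R) :
    Matrix (Fin (2 * r + 1)) (Fin (2 * r + 1)) R :=
  1 + (2 * ξ) • Matrix.single i (midO r) 1
    - ξ • Matrix.single (midO r) (negO r i) 1
    - (ξ * ξ) • Matrix.single i (negO r i) 1

/-- Being an elementary orthogonal transvection (odd case). -/
def IsElemO (r : ℕ) (g : Matrix (Fin (2 * r + 1)) (Fin (2 * r + 1)) R) : Prop :=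
  (∃ i j : Fin (2 * r + 1), ∃ ξ : R, i ≠ midO r ∧ j ≠ midO r ∧ i ≠ j ∧ i ≠ negO r j ∧
      g = TOlong r i j ξ) ∨
  (∃ i : Fin (2 * r + 1), ∃ ξ : R, i ≠ midO r ∧ g = TOshort r i ξ)

/-- `EO(2r+1,R)^{≤N}` : products of at most `N` elementary orthogonal transvections. -/
def EOO (r N : ℕ) (R : Type*) [CommRing R] :
    Set (Matrix (Fin (2 * r + 1)) (Fin (2 * r + 1)) R) :=
  {g | ∃ L : List (Matrix (Fin (2 * r + 1)) (Fin (2 * r + 1)) R),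
    L.length ≤ N ∧ (∀ m ∈ L, IsElemO r m) ∧ g = L.prod}

/-- `IUm_{2r+1}(R)` : columns `b` with `q(b) = 0` such that the row
`(b_1,…,b_r,2b_0,b_{-r},…,b_{-1})` is unimodular. -/
def IUmO (r : ℕ) (R : Type*) [CommRing R] : Set (Fin (2 * r + 1) → R) :=
  {b | Ideal.span (Set.range fun i => if i = midO r then 2 * b i else b i) = ⊤ ∧ quadO r b = 0}

end OddDefs

/-!
Once the first column `b` of an orthogonal matrix has been moved to `e_1`, clearing the last column
costs `2r − 1` further transvections and leaves a matrix `diag(1, β, 1)`. So it suffices to move an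
isotropic unimodular column over `A = C[x_1,…,x_n]` to `e_1`.

Transvections assemble into Eichler transformations `y ↦ y + ⟨y, e⟩ v − ⟨y, v⟩ e − q(v) ⟨y, e⟩ e`,
so that adding a vector with support `J` costs `|J|` transvections.

* Stable range. A submonoid `S` of `A` is built, one variable at a time, from iterated leading
  coefficients, such that primes of `A` disjoint from `S` have height at most `D = dim C`. Prime
  avoidance and `D + 2 ≤ r` then move some coordinate of `b` into `S`.
* Contraction. Each `f ∈ S` becomes monic along a homomorphism `Γ : A → A[t]` which is the identity
  at `t = 1` and factors through `C` at `t = 0`. So `Γ(b)` is a path from `b` to a column over `C`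
  having a monic coordinate.
* Congruence. If `s` is a nonzerodivisor in the ideal spanned by two coordinates of a column, then
  columns of equal value of `q` which agree modulo `s ^ 6` differ by boundedly many transvections.
* Patching. Monicity makes `A[t]/(f)` finite over `A`, so avoiding finitely many primes of `A`
  yields such an `s`; the sixth powers of `n + D + 1` of them span `A`, and the path is traversed in
  `n + D + 1` steps, each divisible by one of these powers.
-/

namespace OddOrthogonal

open QuadraticMap

section Eichler

variable {R M : Type*} [CommRing R] [AddCommGroup M] [Module R M] (Q : QuadraticForm R M)

/-- The Eichler (Siegel) transformation of a quadratic module attached to vectors `e` and `v`,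
an isometry when `e` is singular and `v` is orthogonal to `e`. -/
def eichler (e v : M) : Module.End R M :=
  LinearMap.id + (Q.polarBilin e).smulRight v - (Q.polarBilin v).smulRight e
    - Q v • (Q.polarBilin e).smulRight e

variable {Q}

theorem eichler_apply (e v y : M) :
    eichler Q e v y = y + polar Q e y • v - polar Q v y • e - (Q v * polar Q e y) • e := by
  simp [eichler, mul_smul]

theorem map_eichler {e v : M} (he : Q e = 0) (hev : polar Q e v = 0) (y : M) :
    Q (eichler Q e v y) = Q y := by
  have hve : polar Q v e = 0 := by rw [polar_comm, hev]
  simp only [eichler_apply, sub_eq_add_neg, QuadraticMap.map_add Q, polar_add_left,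
    polar_neg_left, polar_neg_right, polar_smul_left, polar_smul_right, QuadraticMap.map_smul,
    QuadraticMap.map_neg, he, hve, polar_comm Q y v, polar_comm Q y e, polar_self, smul_eq_mul,
    mul_zero]
  ring

theorem eichler_zero (e : M) : eichler Q e 0 = 1 := by
  ext y; simp [eichler_apply]

theorem eichler_add {e v w : M} (he : Q e = 0) (hev : polar Q e v = 0) (hew : polar Q e w = 0) :
    eichler Q e (v + w) = eichler Q e v * eichler Q e w := by
  ext y
  have hve : polar Q v e = 0 := by rw [polar_comm, hev]
  simp only [Module.End.mul_apply, eichler_apply, QuadraticMap.map_add Q, polar_add_left,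
    polar_add_right, polar_sub_right, polar_smul_right, polar_self, he, hew, hve, smul_eq_mul]
  module

theorem eichler_smul_left (t : R) (e v : M) : eichler Q (t • e) v = eichler Q e (t • v) := by
  ext y
  simp only [eichler_apply, polar_smul_left, QuadraticMap.map_smul, smul_eq_mul]
  module

theorem eichler_swap {e v : M} (he : Q e = 0) (hv : Q v = 0) :
    eichler Q e v = eichler Q v (-e) := by
  ext y
  simp only [eichler_apply, polar_neg_left, QuadraticMap.map_neg, he, hv]
  module

theorem eichler_conj {e f x z : M} (he : Q e = 0) (hf : Q f = 0) (hx : Q x = 0) (hz : Q z = 0)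
    (hef : polar Q e f = 1) (hex : polar Q e x = 0) (hez : polar Q e z = 0)
    (hfx : polar Q f x = 0) (hfz : polar Q f z = 0) (hxz : polar Q x z = 0) (c : R) :
    eichler Q e z * eichler Q f x * eichler Q e (-z) * eichler Q f (c • x) =
      eichler Q (z + (1 + c) • f) x := by
  ext y
  simp only [Module.End.mul_apply, eichler_apply, QuadraticMap.map_smul, QuadraticMap.map_neg,
    polar_add_left, polar_add_right, polar_sub_right, polar_smul_left, polar_smul_right,
    polar_neg_left, polar_neg_right, polar_self, he, hf, hx, hz, hef, hex, hez, hfx, hfz, hxz,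
    polar_comm Q f e, polar_comm Q x e, polar_comm Q z e, polar_comm Q x f, polar_comm Q z f,
    polar_comm Q z x, smul_eq_mul]
  module

end Eichler

section SplitForm

variable {R : Type*} [CommRing R] {r : ℕ}

/-- Position of the basis vector `e_i`, `1 ≤ i ≤ r` (indexed from `0`). -/
def posO (i : Fin r) : Fin (2 * r + 1) := ⟨i.val, by omega⟩

@[simp] theorem negO_negO (k : Fin (2 * r + 1)) : negO r (negO r k) = k := by
  ext; simp only [negO]; omega

@[simp] theorem negO_inj {k l : Fin (2 * r + 1)} : negO r k = negO r l ↔ k = l :=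
  (Function.Involutive.injective negO_negO).eq_iff

@[simp] theorem negO_midO : negO r (midO r) = midO r := by
  ext; simp only [negO, midO]; omega

theorem negO_eq_iff {k l : Fin (2 * r + 1)} : negO r k = l ↔ k = negO r l :=
  Function.Involutive.eq_iff negO_negO

theorem negO_ne_midO {k : Fin (2 * r + 1)} (hk : k ≠ midO r) : negO r k ≠ midO r := by
  rwa [ne_eq, negO_eq_iff, negO_midO]

theorem negO_ne_self {k : Fin (2 * r + 1)} (hk : k ≠ midO r) : negO r k ≠ k := by
  simp only [ne_eq, Fin.ext_iff, negO, midO] at *; omega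

@[simp] theorem posO_inj {i j : Fin r} : posO i = posO j ↔ i = j := by
  simp only [posO, Fin.ext_iff]

@[simp] theorem posO_ne_midO (i : Fin r) : posO i ≠ midO r := by
  simp only [posO, midO, ne_eq, Fin.ext_iff]; omega

@[simp] theorem negO_posO_ne_midO (i : Fin r) : negO r (posO i) ≠ midO r :=
  negO_ne_midO (posO_ne_midO i)

@[simp] theorem posO_ne_negO_posO (i j : Fin r) : posO i ≠ negO r (posO j) := by
  simp only [posO, negO, ne_eq, Fin.ext_iff]; omega

@[simp] theorem negO_posO_ne_posO (i j : Fin r) : negO r (posO j) ≠ posO i :=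
  (posO_ne_negO_posO i j).symm

theorem index_cases (k : Fin (2 * r + 1)) :
    k = midO r ∨ (∃ i : Fin r, k = posO i) ∨ ∃ i : Fin r, k = negO r (posO i) := by
  rcases lt_trichotomy k.val r with h | h | h
  · exact .inr (.inl ⟨⟨k, h⟩, rfl⟩)
  · exact .inl (Fin.ext h)
  · refine .inr (.inr ⟨⟨2 * r - k, by omega⟩, Fin.ext ?_⟩)
    simp only [negO, posO]; omega

theorem quadO_eq (x : Fin (2 * r + 1) → R) :
    quadO r x = x (midO r) * x (midO r) + ∑ i, x (posO i) * x (negO r (posO i)) := rfl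

theorem quadO_map {S : Type*} [CommRing S] (φ : R →+* S) (x : Fin (2 * r + 1) → R) :
    quadO r (φ ∘ x) = φ (quadO r x) := by
  simp [quadO_eq]

/-- The split quadratic form `quadO`, bundled so that the theory of quadratic forms applies. -/
def splitForm (r : ℕ) (R : Type*) [CommRing R] : QuadraticForm R (Fin (2 * r + 1) → R) :=
  linMulLin (.proj (midO r)) (.proj (midO r)) +
    ∑ i : Fin r, linMulLin (.proj (posO i)) (.proj (negO r (posO i)))

@[simp] theorem splitForm_apply (x : Fin (2 * r + 1) → R) : splitForm r R x = quadO r x := by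
  simp [splitForm, quadO_eq]

theorem polar_splitForm (x y : Fin (2 * r + 1) → R) :
    polar (splitForm r R) x y = 2 * x (midO r) * y (midO r) +
      ∑ i, (x (posO i) * y (negO r (posO i)) + y (posO i) * x (negO r (posO i))) := by
  simp only [polar, splitForm_apply, quadO_eq, Pi.add_apply, add_mul, mul_add,
    Finset.sum_add_distrib]
  ring

theorem polar_single {k : Fin (2 * r + 1)} (hk : k ≠ midO r) (c : R) (y : Fin (2 * r + 1) → R) :
    polar (splitForm r R) (Pi.single k c) y = c * y (negO r k) := by
  rcases index_cases k with rfl | ⟨i, rfl⟩ | ⟨i, rfl⟩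
  · exact absurd rfl hk
  all_goals simp [polar_splitForm, Pi.single_apply, (posO_ne_midO _).symm,
    (negO_posO_ne_midO _).symm, mul_comm]

theorem polar_single_midO (c : R) (y : Fin (2 * r + 1) → R) :
    polar (splitForm r R) (Pi.single (midO r) c) y = 2 * c * y (midO r) := by
  simp [polar_splitForm]

theorem quadO_single {k : Fin (2 * r + 1)} (hk : k ≠ midO r) (c : R) :
    quadO r (Pi.single k c) = 0 := by
  rcases index_cases k with rfl | ⟨i, rfl⟩ | ⟨i, rfl⟩
  · exact absurd rfl hk
  all_goals simp [quadO_eq, Pi.single_apply, (posO_ne_midO _).symm, (negO_posO_ne_midO _).symm]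

theorem quadO_single_midO (c : R) : quadO r (Pi.single (midO r) c) = c * c := by
  simp [quadO_eq]

theorem eichler_single_apply_of_ne {m k : Fin (2 * r + 1)} (hm : m ≠ midO r) (hk : k ≠ m)
    (v y : Fin (2 * r + 1) → R) :
    eichler (splitForm r R) (Pi.single m 1) v y k = y k + y (negO r m) * v k := by
  simp [eichler_apply, polar_single hm, hk]

theorem eichler_single_apply_self {m : Fin (2 * r + 1)} (hm : m ≠ midO r)
    {v : Fin (2 * r + 1) → R} (hv : v m = 0) (y : Fin (2 * r + 1) → R) :
    eichler (splitForm r R) (Pi.single m 1) v y m =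
      y m - polar (splitForm r R) v y - quadO r v * y (negO r m) := by
  simp [eichler_apply, polar_single hm, hv]

end SplitForm

section Elementary

variable {R : Type*} [CommRing R] {r : ℕ}

theorem TOlong_mulVec (i j : Fin (2 * r + 1)) (ξ : R) (y : Fin (2 * r + 1) → R) :
    TOlong r i j ξ *ᵥ y =
      y + Pi.single i (ξ * y j) - Pi.single (negO r j) (ξ * y (negO r i)) := by
  simp [TOlong, sub_mulVec, add_mulVec, single_mulVec, Pi.single]

theorem TOshort_mulVec (i : Fin (2 * r + 1)) (ξ : R) (y : Fin (2 * r + 1) → R) :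
    TOshort r i ξ *ᵥ y = y + Pi.single i (2 * ξ * y (midO r)) -
      Pi.single (midO r) (ξ * y (negO r i)) - Pi.single i (ξ * ξ * y (negO r i)) := by
  simp [TOshort, sub_mulVec, add_mulVec, single_mulVec, Pi.single]

theorem TOlong_eq_toMatrix'_eichler {i j : Fin (2 * r + 1)} (hi : i ≠ midO r) (hj : j ≠ midO r)
    (ξ : R) :
    TOlong r i j ξ =
      LinearMap.toMatrix' (eichler (splitForm r R) (Pi.single (negO r j) 1) (Pi.single i ξ)) := by
  refine mulVec_injective (funext fun y => ?_)
  rw [TOlong_mulVec, LinearMap.toMatrix'_mulVec, eichler_apply, polar_single (negO_ne_midO hj),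
    polar_single hi, splitForm_apply, quadO_single hi]
  simp [← Pi.single_smul, mul_comm]

theorem TOshort_eq_toMatrix'_eichler {i : Fin (2 * r + 1)} (hi : i ≠ midO r) (ξ : R) :
    TOshort r i ξ =
      LinearMap.toMatrix' (eichler (splitForm r R) (Pi.single i 1) (Pi.single (midO r) (-ξ))) := by
  refine mulVec_injective (funext fun y => ?_)
  rw [TOshort_mulVec, LinearMap.toMatrix'_mulVec, eichler_apply, polar_single hi,
    polar_single_midO, splitForm_apply, quadO_single_midO]
  simp [← Pi.single_smul, Pi.single_neg, mul_comm, sub_eq_add_neg, add_comm, add_left_comm,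
    add_assoc]

theorem isElemO_iff {g : Matrix (Fin (2 * r + 1)) (Fin (2 * r + 1)) R} :
    IsElemO r g ↔ ∃ m k : Fin (2 * r + 1), ∃ ξ : R, m ≠ midO r ∧ k ≠ m ∧ k ≠ negO r m ∧
      g = LinearMap.toMatrix' (eichler (splitForm r R) (Pi.single m 1) (Pi.single k ξ)) := by
  constructor
  · rintro (⟨i, j, ξ, hi, hj, hij, hij', rfl⟩ | ⟨i, ξ, hi, rfl⟩)
    · exact ⟨negO r j, i, ξ, negO_ne_midO hj, hij', by rwa [negO_negO],
        TOlong_eq_toMatrix'_eichler hi hj ξ⟩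
    · exact ⟨i, midO r, -ξ, hi, hi.symm, (negO_ne_midO hi).symm,
        TOshort_eq_toMatrix'_eichler hi ξ⟩
  · rintro ⟨m, k, ξ, hm, hkm, hkm', rfl⟩
    by_cases hk : k = midO r
    · subst hk
      exact .inr ⟨m, -ξ, hm, by rw [TOshort_eq_toMatrix'_eichler hm, neg_neg]⟩
    · exact .inl ⟨k, negO r m, ξ, hk, negO_ne_midO hm, hkm', by rwa [negO_negO],
        by rw [TOlong_eq_toMatrix'_eichler hk (negO_ne_midO hm), negO_negO]⟩

theorem EOO_mono {M N : ℕ} (h : M ≤ N) : EOO r M R ⊆ EOO r N R := by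
  rintro g ⟨L, hL, hE, rfl⟩
  exact ⟨L, hL.trans h, hE, rfl⟩

theorem one_mem_EOO (N : ℕ) : 1 ∈ EOO r N R := ⟨[], by simp⟩

theorem mem_EOO_of_isElemO {g : Matrix (Fin (2 * r + 1)) (Fin (2 * r + 1)) R} (hg : IsElemO r g) :
    g ∈ EOO r 1 R := ⟨[g], by simpa using hg⟩

theorem mul_mem_EOO {M N : ℕ} {g h : Matrix (Fin (2 * r + 1)) (Fin (2 * r + 1)) R}
    (hg : g ∈ EOO r M R) (hh : h ∈ EOO r N R) : g * h ∈ EOO r (M + N) R := by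
  obtain ⟨L, hL, hE, rfl⟩ := hg
  obtain ⟨L', hL', hE', rfl⟩ := hh
  refine ⟨L ++ L', by simp; omega, fun m hm => ?_, List.prod_append.symm⟩
  exact (List.mem_append.1 hm).elim (hE m) (hE' m)

theorem isElemO_toMatrix'_eichler {m k : Fin (2 * r + 1)} (hm : m ≠ midO r) (hk : k ≠ m)
    (hk' : k ≠ negO r m) (ξ : R) :
    IsElemO r (LinearMap.toMatrix' (eichler (splitForm r R) (Pi.single m 1) (Pi.single k ξ))) :=
  isElemO_iff.2 ⟨m, k, ξ, hm, hk, hk', rfl⟩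

theorem toMatrix'_eichler_single_mem_EOO {m k : Fin (2 * r + 1)} (hm : m ≠ midO r) (hk : k ≠ m)
    (hk' : k ≠ negO r m) (ξ : R) :
    LinearMap.toMatrix' (eichler (splitForm r R) (Pi.single m 1) (Pi.single k ξ)) ∈ EOO r 1 R :=
  mem_EOO_of_isElemO (isElemO_toMatrix'_eichler hm hk hk' ξ)

theorem polar_single_single_eq_zero {m k : Fin (2 * r + 1)} (hm : m ≠ midO r) (hk : k ≠ negO r m)
    (c ξ : R) : polar (splitForm r R) (Pi.single m c) (Pi.single k ξ) = 0 := by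
  rw [polar_single hm, Pi.single_eq_of_ne hk.symm, mul_zero]

theorem exists_inv_of_isElemO {g : Matrix (Fin (2 * r + 1)) (Fin (2 * r + 1)) R}
    (hg : IsElemO r g) : ∃ h, IsElemO r h ∧ h * g = 1 := by
  obtain ⟨m, k, ξ, hm, hk, hk', rfl⟩ := isElemO_iff.1 hg
  refine ⟨_, isElemO_toMatrix'_eichler hm hk hk' (-ξ), ?_⟩
  have horth := polar_single_single_eq_zero (R := R) hm hk' 1
  rw [← LinearMap.toMatrix'_mul, ← eichler_add (by simp [quadO_single hm]) (horth _) (horth _),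
    ← Pi.single_add, neg_add_cancel, Pi.single_zero, eichler_zero, LinearMap.toMatrix'_one]

theorem exists_inv_of_mem_EOO {N : ℕ} {g : Matrix (Fin (2 * r + 1)) (Fin (2 * r + 1)) R}
    (hg : g ∈ EOO r N R) : ∃ h ∈ EOO r N R, h * g = 1 := by
  obtain ⟨L, hL, hE, rfl⟩ := hg
  refine (?_ : ∃ h ∈ EOO r L.length R, h * L.prod = 1).imp fun h hh => ⟨EOO_mono hL hh.1, hh.2⟩
  clear hL
  induction L with
  | nil => exact ⟨1, one_mem_EOO _, by simp⟩
  | cons m L ih =>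
    obtain ⟨h, hh, hhL⟩ := ih fun m' hm' => hE m' (List.mem_cons_of_mem _ hm')
    obtain ⟨m', hm', hmm'⟩ := exists_inv_of_isElemO (hE m List.mem_cons_self)
    exact ⟨h * m', mul_mem_EOO hh (mem_EOO_of_isElemO hm'), by
      rw [List.prod_cons, mul_assoc, ← mul_assoc m', hmm', one_mul, hhL]⟩

theorem isUnit_of_mem_EOO {N : ℕ} {g : Matrix (Fin (2 * r + 1)) (Fin (2 * r + 1)) R}
    (hg : g ∈ EOO r N R) : IsUnit g := by
  obtain ⟨h, -, hh⟩ := exists_inv_of_mem_EOO hg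
  exact IsUnit.of_mul_eq_one_right h hh

theorem quadO_mulVec_of_mem_EOO {N : ℕ} {g : Matrix (Fin (2 * r + 1)) (Fin (2 * r + 1)) R}
    (hg : g ∈ EOO r N R) (x : Fin (2 * r + 1) → R) : quadO r (g *ᵥ x) = quadO r x := by
  obtain ⟨L, -, hE, rfl⟩ := hg
  induction L with
  | nil => simp
  | cons m L ih =>
    obtain ⟨l, k, ξ, hl, -, hk', rfl⟩ := isElemO_iff.1 (hE m List.mem_cons_self)
    rw [List.prod_cons, ← mulVec_mulVec, LinearMap.toMatrix'_mulVec,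
      ← splitForm_apply, map_eichler (by simp [quadO_single hl])
        (polar_single_single_eq_zero hl hk' _ _), splitForm_apply]
    exact ih fun m' hm' => hE m' (List.mem_cons_of_mem _ hm')

theorem mul_mem_OO_of_mem_EOO {N : ℕ} {E g : Matrix (Fin (2 * r + 1)) (Fin (2 * r + 1)) R}
    (hE : E ∈ EOO r N R) (hg : g ∈ OO r R) : E * g ∈ OO r R :=
  ⟨(isUnit_of_mem_EOO hE).mul hg.1, fun x => by
    rw [← mulVec_mulVec, quadO_mulVec_of_mem_EOO hE, hg.2]⟩

theorem map_mem_EOO {S : Type*} [CommRing S] (φ : R →+* S) {N : ℕ}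
    {g : Matrix (Fin (2 * r + 1)) (Fin (2 * r + 1)) R} (hg : g ∈ EOO r N R) :
    φ.mapMatrix g ∈ EOO r N S := by
  obtain ⟨L, hL, hE, rfl⟩ := hg
  refine ⟨L.map φ.mapMatrix, by simpa using hL, ?_, map_list_prod _ _⟩
  simp only [List.mem_map, forall_exists_index, and_imp, forall_apply_eq_imp_iff₂]
  intro m hm
  rcases hE m hm with ⟨i, j, ξ, hi, hj, hij, hij', rfl⟩ | ⟨i, ξ, hi, rfl⟩
  · refine .inl ⟨i, j, φ ξ, hi, hj, hij, hij', ?_⟩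
    simp only [TOlong, smul_single, smul_eq_mul, mul_one, map_sub, map_add, map_one,
      RingHom.mapMatrix_apply, Matrix.map_single]
  · refine .inr ⟨i, φ ξ, hi, ?_⟩
    simp only [TOshort, smul_single, smul_eq_mul, mul_one, map_sub, map_add, map_one,
      RingHom.mapMatrix_apply, Matrix.map_single, map_mul, map_ofNat]

theorem toMatrix'_eichler_mem_EOO {m : Fin (2 * r + 1)} (hm : m ≠ midO r)
    {J : Finset (Fin (2 * r + 1))} (hmJ : m ∉ J) (hmJ' : negO r m ∉ J)
    {v : Fin (2 * r + 1) → R} (hv : ∀ k ∉ J, v k = 0) :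
    LinearMap.toMatrix' (eichler (splitForm r R) (Pi.single m 1) v) ∈ EOO r J.card R := by
  induction J using Finset.induction_on generalizing v with
  | empty =>
    obtain rfl : v = 0 := funext fun k => hv k (Finset.notMem_empty k)
    rw [eichler_zero, LinearMap.toMatrix'_one]
    exact one_mem_EOO _
  | insert j J hj ih =>
    rw [Finset.mem_insert, not_or] at hmJ hmJ'
    have hsplit : v = Pi.single j (v j) + Function.update v j 0 := by
      ext k; by_cases h : k = j <;> simp [h]
    have hupd : ∀ k ∉ J, Function.update v j 0 k = 0 := fun k hk => by
      rcases eq_or_ne k j with rfl | h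
      · exact Function.update_self _ _ _
      · rw [Function.update_of_ne h, hv k (by simp [h, hk])]
    have hQ : splitForm r R (Pi.single m 1) = 0 := by simp [quadO_single hm]
    rw [hsplit, eichler_add hQ (polar_single_single_eq_zero hm (Ne.symm hmJ'.1) _ _)
      (by rw [polar_single hm, hupd _ hmJ'.2, mul_zero]), LinearMap.toMatrix'_mul,
      Finset.card_insert_of_notMem hj]
    have hj₁ := toMatrix'_eichler_single_mem_EOO hm (Ne.symm hmJ.1) (Ne.symm hmJ'.1) (v j)
    exact EOO_mono (add_comm 1 J.card).le (mul_mem_EOO hj₁ (ih hmJ.2 hmJ'.2 hupd))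

end Elementary

section Reach

variable {R : Type*} [CommRing R] {r : ℕ}

theorem span_range_mulVec_le {ι κ : Type*} [Fintype κ] (g : Matrix ι κ R) (b : κ → R) :
    Ideal.span (Set.range (g *ᵥ b)) ≤ Ideal.span (Set.range b) := by
  rw [Ideal.span_le]
  rintro _ ⟨i, rfl⟩
  rw [SetLike.mem_coe, mulVec, dotProduct]
  exact Ideal.sum_mem (Ideal.span (Set.range b)) fun j _ =>
    Ideal.mul_mem_left _ _ (Ideal.subset_span (Set.mem_range_self j))

/-- `Reach N b c`: some product of at most `N` elementary orthogonal transvections takes the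
column `b` to the column `c`. -/
def Reach (N : ℕ) (b c : Fin (2 * r + 1) → R) : Prop :=
  ∃ E ∈ EOO r N R, E *ᵥ b = c

namespace Reach

variable {M N : ℕ} {b c d : Fin (2 * r + 1) → R}

theorem refl (N : ℕ) (b : Fin (2 * r + 1) → R) : Reach N b b :=
  ⟨1, one_mem_EOO N, one_mulVec b⟩

theorem mono (h : Reach M b c) (hMN : M ≤ N) : Reach N b c :=
  h.imp fun _ hE => ⟨EOO_mono hMN hE.1, hE.2⟩

theorem trans (h : Reach M b c) (h' : Reach N c d) : Reach (M + N) b d := by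
  obtain ⟨E, hE, rfl⟩ := h
  obtain ⟨E', hE', rfl⟩ := h'
  exact ⟨E' * E, EOO_mono (add_comm N M).le (mul_mem_EOO hE' hE), by rw [mulVec_mulVec]⟩

theorem symm (h : Reach N b c) : Reach N c b := by
  obtain ⟨E, hE, rfl⟩ := h
  obtain ⟨E', hE', hEE'⟩ := exists_inv_of_mem_EOO hE
  exact ⟨E', hE', by rw [mulVec_mulVec, hEE', one_mulVec]⟩

theorem map {S : Type*} [CommRing S] (φ : R →+* S) (h : Reach N b c) :
    Reach N (φ ∘ b) (φ ∘ c) := by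
  obtain ⟨E, hE, rfl⟩ := h
  exact ⟨φ.mapMatrix E, map_mem_EOO φ hE, funext fun i => (RingHom.map_mulVec φ E b i).symm⟩

theorem quadO_eq (h : Reach N b c) : quadO r c = quadO r b := by
  obtain ⟨E, hE, rfl⟩ := h
  exact quadO_mulVec_of_mem_EOO hE b

theorem span_range_le (h : Reach N b c) :
    Ideal.span (Set.range c) ≤ Ideal.span (Set.range b) := by
  obtain ⟨E, -, rfl⟩ := h
  exact span_range_mulVec_le E b

theorem span_range_eq (h : Reach N b c) :
    Ideal.span (Set.range c) = Ideal.span (Set.range b) :=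
  h.span_range_le.antisymm h.symm.span_range_le

theorem eichler {m : Fin (2 * r + 1)} (hm : m ≠ midO r)
    {J : Finset (Fin (2 * r + 1))} (hmJ : m ∉ J) (hmJ' : negO r m ∉ J)
    {v : Fin (2 * r + 1) → R} (hv : ∀ k ∉ J, v k = 0) (b : Fin (2 * r + 1) → R) :
    Reach J.card b (eichler (splitForm r R) (Pi.single m 1) v b) :=
  ⟨_, toMatrix'_eichler_mem_EOO hm hmJ hmJ' hv, LinearMap.toMatrix'_mulVec _ _⟩

end Reach

theorem quadO_add_single {k : Fin (2 * r + 1)} (hk : k ≠ midO r) (x : Fin (2 * r + 1) → R) (t : R) :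
    quadO r (x + Pi.single k t) = quadO r x + t * x (negO r k) := by
  rw [← splitForm_apply, QuadraticMap.map_add (splitForm r R), splitForm_apply, splitForm_apply,
    quadO_single hk, polar_comm, polar_single hk, add_zero]

theorem card_compl_pair_negO {m : Fin (2 * r + 1)} (hm : m ≠ midO r) :
    ({m, negO r m}ᶜ : Finset (Fin (2 * r + 1))).card = 2 * r - 1 := by
  rw [Finset.card_compl, Finset.card_pair (negO_ne_self hm).symm, Fintype.card_fin]
  omega

theorem exists_mem_EOO_mulVec_eq_single {b : Fin (2 * r + 1) → R} (hb : quadO r b = 0)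
    {m : Fin (2 * r + 1)} (hm : m ≠ midO r) (hbm : b m = 1) :
    ∃ E ∈ EOO r (2 * r - 1) R, E *ᵥ b = Pi.single m 1 ∧
      E *ᵥ Pi.single (negO r m) 1 = Pi.single (negO r m) 1 := by
  set J : Finset (Fin (2 * r + 1)) := {m, negO r m}ᶜ with hJ
  set v : Fin (2 * r + 1) → R := fun k => if k ∈ J then -b k else 0 with hv
  have hvm : v m = 0 := by simp [hv, hJ]
  have hm' := negO_ne_midO hm
  have hE : LinearMap.toMatrix' (eichler (splitForm r R) (Pi.single (negO r m) 1) v) ∈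
      EOO r (2 * r - 1) R := by
    rw [← card_compl_pair_negO hm]
    exact toMatrix'_eichler_mem_EOO hm' (by simp) (by simp) fun k hk => if_neg hk
  refine ⟨_, hE, ?_, ?_⟩
  · set c := LinearMap.toMatrix' (eichler (splitForm r R) (Pi.single (negO r m) 1) v) *ᵥ b with hc
    have hck : c = Pi.single m 1 + Pi.single (negO r m) (c (negO r m)) := by
      ext k
      by_cases hk : k = negO r m
      · simp [hk, negO_ne_self hm]
      · rw [hc, LinearMap.toMatrix'_mulVec, eichler_single_apply_of_ne hm' hk, negO_negO, hbm]
        by_cases hkm : k = m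
        · simp [hkm, hvm, hbm, (negO_ne_self hm).symm]
        · simp [hv, hJ, hk, hkm]
    have hqc : quadO r c = 0 := by rw [hc, quadO_mulVec_of_mem_EOO hE, hb]
    rw [hck, quadO_add_single hm', quadO_single hm, negO_negO, Pi.single_eq_same, zero_add,
      mul_one] at hqc
    rw [hck, hqc, Pi.single_zero, add_zero]
  · rw [LinearMap.toMatrix'_mulVec, eichler_apply, polar_comm _ v, polar_single hm',
      polar_single hm', negO_negO, hvm, Pi.single_eq_of_ne (negO_ne_self hm).symm]
    simp

end Reach

section Congruence

variable {R : Type*} [CommRing R] {r : ℕ}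

theorem toMatrix'_eichler_pair {m k l : Fin (2 * r + 1)} (hm : m ≠ midO r)
    (hk : k ≠ negO r m) (hl : l ≠ negO r m) (ξ η : R) :
    LinearMap.toMatrix' (eichler (splitForm r R) (Pi.single m 1) (Pi.single k ξ + Pi.single l η)) =
      LinearMap.toMatrix' (eichler (splitForm r R) (Pi.single m 1) (Pi.single k ξ)) *
        LinearMap.toMatrix' (eichler (splitForm r R) (Pi.single m 1) (Pi.single l η)) := by
  rw [← LinearMap.toMatrix'_mul, eichler_add (by simp [quadO_single hm])
    (polar_single_single_eq_zero hm hk _ _) (polar_single_single_eq_zero hm hl _ _)]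

theorem toMatrix'_eichler_pair_mem_EOO {m k l : Fin (2 * r + 1)} (hm : m ≠ midO r) (hk : k ≠ m)
    (hk' : k ≠ negO r m) (hl : l ≠ m) (hl' : l ≠ negO r m) (ξ η : R) :
    LinearMap.toMatrix' (eichler (splitForm r R) (Pi.single m 1) (Pi.single k ξ + Pi.single l η)) ∈
      EOO r 2 R := by
  rw [toMatrix'_eichler_pair hm hk' hl']
  exact mul_mem_EOO (toMatrix'_eichler_single_mem_EOO hm hk hk' ξ)
    (toMatrix'_eichler_single_mem_EOO hm hl hl' η)

theorem eichler_triple {p s t : Fin r} (hps : p ≠ s) (hpt : p ≠ t) (hst : s ≠ t)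
    (a qp qs qt : R) :
    let z : Fin (2 * r + 1) → R :=
      Pi.single (negO r (posO p)) qp + Pi.single (negO r (posO t)) qt
    let x : Fin (2 * r + 1) → R := Pi.single (posO p) (a * qt) + Pi.single (posO t) (-(a * qp))
    eichler (splitForm r R) (Pi.single (posO s) 1) z *
        eichler (splitForm r R) (Pi.single (negO r (posO s)) 1) x *
        eichler (splitForm r R) (Pi.single (posO s) 1) (-z) *
        eichler (splitForm r R) (Pi.single (negO r (posO s)) 1) ((qs - 1) • x) =
      eichler (splitForm r R) (z + Pi.single (negO r (posO s)) qs) x := by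
  intro z x
  rw [eichler_conj]
  · simp [← Pi.single_smul]
  all_goals simp [x, z, quadO_single, quadO_add_single, polar_single,
    hps.symm, hpt, hpt.symm, hst]
  ring

theorem toMatrix'_eichler_triple_eq_mul {p s t : Fin r} (hps : p ≠ s) (hpt : p ≠ t) (hst : s ≠ t)
    (a qp qs qt : R) :
    let T := LinearMap.toMatrix' (eichler (splitForm r R)
      (Pi.single (negO r (posO p)) qp + Pi.single (negO r (posO t)) qt +
        Pi.single (negO r (posO s)) qs)
      (Pi.single (posO p) (a * qt) + Pi.single (posO t) (-(a * qp))))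
    (∃ A ∈ EOO r 7 R, T = LinearMap.toMatrix' (eichler (splitForm r R) (Pi.single (posO s) 1)
        (Pi.single (negO r (posO p)) qp)) * A) ∧
      ∃ A ∈ EOO r 7 R, T = A * LinearMap.toMatrix' (eichler (splitForm r R)
        (Pi.single (negO r (posO s)) 1) (Pi.single (posO p) ((qs - 1) * (a * qt)))) := by
  intro T
  have hT := (congrArg LinearMap.toMatrix' (eichler_triple hps hpt hst a qp qs qt)).symm
  simp only [LinearMap.toMatrix'_mul, smul_add, neg_add, ← Pi.single_smul, ← Pi.single_neg,
    smul_eq_mul] at hT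
  have hneg := fun x y : R => toMatrix'_eichler_pair_mem_EOO (posO_ne_midO s)
    (negO_posO_ne_posO s p) (by simp [hps]) (negO_posO_ne_posO s t) (by simp [hst.symm]) x y
  have hpos := fun x y : R => toMatrix'_eichler_pair_mem_EOO (negO_posO_ne_midO s)
    (posO_ne_negO_posO p s) (by simp [hps]) (posO_ne_negO_posO t s) (by simp [hst.symm]) x y
  constructor
  · rw [toMatrix'_eichler_pair (posO_ne_midO s) (by simp [hps]) (by simp [hst.symm]) qp qt] at hT
    simp only [mul_assoc] at hT
    exact ⟨_, mul_mem_EOO (toMatrix'_eichler_single_mem_EOO (by simp) (by simp)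
      (by simp [hst.symm]) _) (mul_mem_EOO (hpos _ _) (mul_mem_EOO (hneg _ _) (hpos _ _))), hT⟩
  · rw [add_comm (Pi.single (posO p) ((qs - 1) * (a * qt)) : Fin (2 * r + 1) → R),
      toMatrix'_eichler_pair (negO_posO_ne_midO s) (by simp [hst.symm]) (by simp [hps])
        ((qs - 1) * -(a * qp)), ← mul_assoc] at hT
    exact ⟨_, mul_mem_EOO (mul_mem_EOO (mul_mem_EOO (hneg _ _) (hpos _ _)) (hneg _ _))
      (toMatrix'_eichler_single_mem_EOO (by simp) (by simp) (by simp [hst.symm]) _), hT⟩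

theorem toMatrix'_eichler_two_triples_mem_EOO {i j k : Fin r} (hij : i ≠ j) (hik : i ≠ k)
    (hjk : j ≠ k) (α β qi qj qk : R) :
    LinearMap.toMatrix' (eichler (splitForm r R)
      (Pi.single (negO r (posO i)) qi + Pi.single (negO r (posO j)) qj +
        Pi.single (negO r (posO k)) qk)
      (Pi.single (posO i) (α * qk) + Pi.single (posO j) (β * qk) +
        Pi.single (posO k) (-(α * qi + β * qj)))) ∈ EOO r 15 R := by
  obtain ⟨A, hA, hAeq⟩ := (toMatrix'_eichler_triple_eq_mul hij hik hjk α qi qj qk).1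
  obtain ⟨A', hA', hAeq'⟩ := (toMatrix'_eichler_triple_eq_mul hij.symm hjk hik β qj qi qk).2
  set g : Fin (2 * r + 1) → R := Pi.single (negO r (posO i)) qi +
    Pi.single (negO r (posO j)) qj + Pi.single (negO r (posO k)) qk with hg
  have hg₁ : Pi.single (negO r (posO i)) qi + Pi.single (negO r (posO k)) qk +
      Pi.single (negO r (posO j)) qj = g := by rw [hg]; abel
  have hg₂ : Pi.single (negO r (posO j)) qj + Pi.single (negO r (posO k)) qk +
      Pi.single (negO r (posO i)) qi = g := by rw [hg]; abel
  rw [hg₁] at hAeq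
  rw [hg₂] at hAeq'
  have hsplit : (Pi.single (posO i) (α * qk) + Pi.single (posO j) (β * qk) +
        Pi.single (posO k) (-(α * qi + β * qj)) : Fin (2 * r + 1) → R) =
      (Pi.single (posO j) (β * qk) + Pi.single (posO k) (-(β * qj))) +
        (Pi.single (posO i) (α * qk) + Pi.single (posO k) (-(α * qi))) := by
    rw [neg_add, Pi.single_add]; abel
  -- The factors of the two products that meet in the middle belong to the same root subgroup.
  have hswap : eichler (splitForm r R) (Pi.single (posO j) 1) (Pi.single (negO r (posO i)) qi) =
      eichler (splitForm r R) (Pi.single (negO r (posO i)) 1) (Pi.single (posO j) (-qi)) := by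
    rw [eichler_swap (by simp [quadO_single]) (by simp [quadO_single]),
      show (Pi.single (negO r (posO i)) qi : Fin (2 * r + 1) → R) =
        qi • Pi.single (negO r (posO i)) 1 by simp [← Pi.single_smul], eichler_smul_left]
    simp [← Pi.single_smul, ← Pi.single_neg]
  rw [hsplit, eichler_add, LinearMap.toMatrix'_mul, hAeq, hAeq', mul_assoc, ← mul_assoc _ _ A,
    hswap, ← LinearMap.toMatrix'_mul, ← eichler_add, ← Pi.single_add]
  · exact mul_mem_EOO hA' (mul_mem_EOO (M := 1)
      (toMatrix'_eichler_single_mem_EOO (by simp) (by simp) (by simp [hij.symm]) _) hA)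
  all_goals simp [hg, quadO_add_single, quadO_single, polar_single, hij, hij.symm, hik,
    hik.symm, hjk, hjk.symm]
  all_goals ring

theorem dvd_eichler_smul_apply_sub (t : R) (e v y : Fin (2 * r + 1) → R) (l : Fin (2 * r + 1)) :
    t ∣ eichler (splitForm r R) e (t • v) y l - y l := by
  refine ⟨polar (splitForm r R) e y * v l - polar (splitForm r R) v y * e l -
    t * quadO r v * polar (splitForm r R) e y * e l, ?_⟩
  simp only [eichler_apply, polar_smul_left, QuadraticMap.map_smul, splitForm_apply, smul_eq_mul,
    Pi.sub_apply, Pi.add_apply, Pi.smul_apply]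
  ring

theorem exists_reach_add_pow {i j k : Fin r} (hij : i ≠ j) (hik : i ≠ k) (hjk : j ≠ k)
    (b : Fin (2 * r + 1) → R) {s c₁ c₂ : R} (hs : c₁ * b (posO i) + c₂ * b (posO j) = s)
    (α β : R) :
    ∃ d, Reach 15 b d ∧ d (posO i) = b (posO i) + s ^ 6 * α ∧
      d (posO j) = b (posO j) + s ^ 6 * β ∧ ∀ l, s ^ 3 ∣ d l - b l := by
  -- `κ` is chosen so that the pairing of `g` with `b` is `s ^ 2`.
  set κ := s - b (posO k) with hκ
  set g : Fin (2 * r + 1) → R := Pi.single (negO r (posO i)) (κ * c₁) +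
    Pi.single (negO r (posO j)) (κ * c₂) + Pi.single (negO r (posO k)) s with hg
  set y : Fin (2 * r + 1) → R := Pi.single (posO i) (α * s) + Pi.single (posO j) (β * s) +
    Pi.single (posO k) (-(α * (κ * c₁) + β * (κ * c₂))) with hy
  have hmem := toMatrix'_eichler_two_triples_mem_EOO hij hik hjk (s ^ 3 * α) (s ^ 3 * β)
    (κ * c₁) (κ * c₂) s
  have hys : s ^ 3 • y = Pi.single (posO i) (s ^ 3 * α * s) + Pi.single (posO j) (s ^ 3 * β * s) +
      Pi.single (posO k) (-(s ^ 3 * α * (κ * c₁) + s ^ 3 * β * (κ * c₂))) := by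
    simp only [hy, smul_add, ← Pi.single_smul, smul_eq_mul]
    ring_nf
  have hgb : polar (splitForm r R) g b = s ^ 2 := by
    simp only [hg, polar_add_left, polar_single (negO_posO_ne_midO _), negO_negO]
    linear_combination κ * hs + s * hκ
  have hgi : g (posO i) = 0 := by simp [hg]
  have hgj : g (posO j) = 0 := by simp [hg]
  have hyi : y (posO i) = α * s := by simp [hy, hij, hik]
  have hyj : y (posO j) = β * s := by simp [hy, hij.symm, hjk]
  rw [← hys, ← hg] at hmem
  refine ⟨_, ⟨_, hmem, LinearMap.toMatrix'_mulVec _ _⟩, ?_, ?_, dvd_eichler_smul_apply_sub _ _ _ _⟩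
  · simp only [eichler_apply, Pi.sub_apply, Pi.add_apply, Pi.smul_apply, smul_eq_mul, hgb, hgi, hyi]
    ring
  · simp only [eichler_apply, Pi.sub_apply, Pi.add_apply, Pi.smul_apply, smul_eq_mul, hgb, hgj, hyj]
    ring

theorem card_compl_quadruple {i j : Fin r} (hij : i ≠ j) :
    ({posO i, negO r (posO i), posO j, negO r (posO j)}ᶜ : Finset (Fin (2 * r + 1))).card =
      2 * (r - 2) + 1 := by
  have hval := Fin.val_ne_of_ne hij
  rw [Finset.card_compl, Fintype.card_fin, Finset.card_insert_of_notMem (by simp [hij]),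
    Finset.card_insert_of_notMem (by simp [hij]), Finset.card_pair (by simp)]
  omega

theorem exists_reach_eq_off {i j : Fin r} (hij : i ≠ j) {b b' : Fin (2 * r + 1) → R}
    {s c₁ c₂ : R} (hs : c₁ * b (posO i) + c₂ * b (posO j) = s) (hi : b' (posO i) = b (posO i))
    (hj : b' (posO j) = b (posO j)) (hdvd : ∀ l, s ^ 3 ∣ b' l - b l) :
    ∃ d, Reach (4 * (r - 2) + 2) b d ∧
      (∀ l, l ≠ negO r (posO i) → l ≠ negO r (posO j) → d l = b' l) ∧ ∀ l, s ^ 2 ∣ b' l - d l := by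
  choose γ hγ using hdvd
  set J : Finset (Fin (2 * r + 1)) := {posO i, negO r (posO i), posO j, negO r (posO j)}ᶜ with hJ
  set w : Fin (2 * r + 1) → R := fun l => if l ∈ J then γ l else 0 with hw
  have hwJ : ∀ c : R, ∀ l ∉ J, (s ^ 2 • c • w) l = 0 := fun c l hl => by simp [hw, hl]
  set d₁ := eichler (splitForm r R) (Pi.single (negO r (posO j)) 1) (s ^ 2 • c₂ • w) b with hd₁
  set d := eichler (splitForm r R) (Pi.single (negO r (posO i)) 1) (s ^ 2 • c₁ • w) d₁ with hd
  have hR : Reach (4 * (r - 2) + 2) b d := by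
    have h₁ : Reach J.card b d₁ := .eichler (by simp) (by simp [hJ]) (by simp [hJ]) (hwJ c₂) b
    have h₂ : Reach J.card d₁ d := .eichler (by simp) (by simp [hJ]) (by simp [hJ]) (hwJ c₁) d₁
    exact (h₁.trans h₂).mono (by rw [hJ, card_compl_quadruple hij]; omega)
  refine ⟨d, hR, fun l hli hlj => ?_, fun l => ?_⟩
  · have hd₁i : d₁ (posO i) = b (posO i) := by
      rw [hd₁, eichler_single_apply_of_ne (by simp) (by simp), hwJ _ _ (by simp [hJ])]; ring
    rw [hd, eichler_single_apply_of_ne (by simp) hli, hd₁,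
      eichler_single_apply_of_ne (by simp) hlj, ← hd₁, negO_negO, negO_negO, hd₁i]
    by_cases hl : l ∈ J
    · simp only [hw, hl, Pi.smul_apply, smul_eq_mul, if_true]
      linear_combination s ^ 2 * γ l * hs - hγ l
    · rw [hwJ _ _ hl, hwJ _ _ hl]
      obtain rfl | rfl : l = posO i ∨ l = posO j := by
        simp only [hJ, Finset.mem_compl, Finset.mem_insert, Finset.mem_singleton] at hl; tauto
      · rw [hi]; ring
      · rw [hj]; ring
  · have h₁ : s ^ 2 ∣ b' l - b l := ⟨s * γ l, by rw [hγ]; ring⟩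
    have h₂ : s ^ 2 ∣ d₁ l - b l := dvd_eichler_smul_apply_sub _ _ _ _ _
    have h₃ : s ^ 2 ∣ d l - d₁ l := dvd_eichler_smul_apply_sub _ _ _ _ _
    convert (h₁.sub h₂).sub h₃ using 1
    ring

theorem reach_of_eq_off {i j : Fin r} (hij : i ≠ j) {b b' : Fin (2 * r + 1) → R} {s c₁ c₂ : R}
    (hs : c₁ * b (posO i) + c₂ * b (posO j) = s) (hsR : s ∈ nonZeroDivisors R)
    (hq : quadO r b' = quadO r b)
    (hoff : ∀ l, l ≠ negO r (posO i) → l ≠ negO r (posO j) → b l = b' l)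
    (hdvd : ∀ l, s ^ 2 ∣ b' l - b l) : Reach 1 b b' := by
  obtain ⟨x, hx⟩ := hdvd (negO r (posO i))
  obtain ⟨y, hy⟩ := hdvd (negO r (posO j))
  have hb' : b' = b + Pi.single (negO r (posO i)) (s ^ 2 * x) +
      Pi.single (negO r (posO j)) (s ^ 2 * y) := by
    ext l
    by_cases hli : l = negO r (posO i)
    · subst hli; simp [← hx, hij]
    by_cases hlj : l = negO r (posO j)
    · subst hlj; simp [← hy, hij.symm]
    simp [hli, hlj, hoff l hli hlj]
  have hrel : x * b (posO i) + y * b (posO j) = 0 := by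
    rw [hb', quadO_add_single (by simp), quadO_add_single (by simp)] at hq
    simp only [negO_negO, Pi.add_apply, Pi.single_eq_of_ne (posO_ne_negO_posO _ _)] at hq
    refine (mul_right_mem_nonZeroDivisors_eq_zero_iff (pow_mem hsR 2)).1 ?_
    linear_combination hq
  refine ⟨_, toMatrix'_eichler_single_mem_EOO (negO_posO_ne_midO j)
    (k := negO r (posO i)) (by simp [hij]) (by simp) (s * (c₂ * x - c₁ * y)), ?_⟩
  rw [LinearMap.toMatrix'_mulVec, eichler_apply, polar_single (by simp), polar_single (by simp),
    splitForm_apply, quadO_single (by simp), negO_negO, negO_negO, hb']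
  simp only [← Pi.single_smul, smul_eq_mul, zero_mul, zero_smul, sub_zero, mul_one, one_mul]
  rw [show b (posO j) * (s * (c₂ * x - c₁ * y)) = s ^ 2 * x by
      linear_combination s * x * hs - s * c₁ * hrel,
    show s * (c₂ * x - c₁ * y) * b (posO i) = -(s ^ 2 * y) by
      linear_combination -s * y * hs + s * c₂ * hrel, Pi.single_neg, sub_neg_eq_add]

theorem reach_of_dvd_sub {i j k : Fin r} (hij : i ≠ j) (hik : i ≠ k) (hjk : j ≠ k)
    {b b' : Fin (2 * r + 1) → R} {s c₁ c₂ c₁' c₂' : R}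
    (hs : c₁ * b (posO i) + c₂ * b (posO j) = s) (hs' : c₁' * b' (posO i) + c₂' * b' (posO j) = s)
    (hsR : s ∈ nonZeroDivisors R) (hq : quadO r b' = quadO r b) (hdvd : ∀ l, s ^ 6 ∣ b' l - b l) :
    Reach (15 + (4 * (r - 2) + 2) + 1) b b' := by
  obtain ⟨α, hα⟩ := hdvd (posO i)
  obtain ⟨β, hβ⟩ := hdvd (posO j)
  obtain ⟨d, hbd, hdi, hdj, hd⟩ := exists_reach_add_pow hij hik hjk b hs α β
  have hdi' : b' (posO i) = d (posO i) := by linear_combination hα - hdi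
  have hdj' : b' (posO j) = d (posO j) := by linear_combination hβ - hdj
  have hd' : ∀ l, s ^ 3 ∣ b' l - d l := fun l => by
    simpa using ((pow_dvd_pow s (by norm_num)).trans (hdvd l)).sub (hd l)
  have hsd : c₁' * d (posO i) + c₂' * d (posO j) = s := by rw [← hdi', ← hdj', hs']
  obtain ⟨f, hdf, hoff, hf⟩ := exists_reach_eq_off hij hsd hdi' hdj' hd'
  have hsf : c₁' * f (posO i) + c₂' * f (posO j) = s := by
    rw [hoff _ (by simp) (by simp), hoff _ (by simp) (by simp), hs']
  have hbf := hbd.trans hdf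
  exact hbf.trans (reach_of_eq_off hij hsf hsR (by rw [hq, hbf.quadO_eq]) hoff hf)

end Congruence

section Avoidance

variable {R : Type*} [CommRing R]

theorem exists_forall_add_mul_notMem (Ps : Finset (Ideal R)) (hp : ∀ P ∈ Ps, P.IsPrime)
    (a y : Ideal R → R) (h : ∀ P ∈ Ps, a P ∉ P ∨ y P ∉ P) :
    ∃ ξ : R, ∀ P ∈ Ps, a P + ξ * y P ∉ P := by
  classical
  induction Ps using Finset.strongInduction with
  | H Ps ih =>
  obtain rfl | hne := Ps.eq_empty_or_nonempty
  · exact ⟨0, by simp⟩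
  obtain ⟨Q, hQ, hQmin⟩ := Ps.exists_minimal hne
  have hQp := hp Q hQ
  have of_mem_erase {P} (hP : P ∈ Ps.erase Q) : P ∈ Ps := Finset.mem_of_mem_erase hP
  obtain ⟨ξ, hξ⟩ := ih _ (Finset.erase_ssubset hQ) (fun P hP => hp P (of_mem_erase hP))
    fun P hP => h P (of_mem_erase hP)
  by_cases hQξ : a Q + ξ * y Q ∈ Q
  · have hy : y Q ∉ Q := fun hy => (h Q hQ).elim
      (fun ha => ha ((Q.add_mem_iff_left (Q.mul_mem_left ξ hy)).1 hQξ)) fun hy' => hy' hy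
    obtain ⟨e, he, heQ⟩ : ∃ e ∈ (Ps.erase Q).inf id, e ∉ Q := by
      rw [← SetLike.not_le_iff_exists, hQp.inf_le']
      rintro ⟨P, hP, hPQ⟩
      exact Finset.ne_of_mem_erase hP (hPQ.antisymm (hQmin (of_mem_erase hP) hPQ))
    have expand (P) : a P + (ξ + e) * y P = a P + ξ * y P + e * y P := by ring
    refine ⟨ξ + e, fun P hP => ?_⟩
    rw [expand]
    obtain rfl | hPQ := eq_or_ne P Q
    · rw [P.add_mem_iff_right hQξ]
      exact hQp.mul_notMem heQ hy
    · have hP' := Finset.mem_erase.2 ⟨hPQ, hP⟩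
      have heP : e ∈ P := Finset.inf_le (f := id) hP' he
      rw [P.add_mem_iff_left (P.mul_mem_right _ heP)]
      exact hξ P hP'
  · refine ⟨ξ, fun P hP => ?_⟩
    obtain rfl | hPQ := eq_or_ne P Q
    · exact hQξ
    · exact hξ P (Finset.mem_erase.2 ⟨hPQ, hP⟩)

theorem exists_forall_notMem_of_multiaffine {κ : Type*} [DecidableEq κ] (J : Finset κ)
    (F : (κ → R) → R)
    (hF : ∀ j ∈ J, ∀ v t, F (Function.update v j t) = F (Function.update v j 0) +
      t * (F (Function.update v j 1) - F (Function.update v j 0)))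
    (Ps : Finset (Ideal R)) (hp : ∀ P ∈ Ps, P.IsPrime)
    (h : ∀ P ∈ Ps, ∃ v : κ → R, (∀ k ∉ J, v k = 0) ∧ F v ∉ P) :
    ∃ v : κ → R, (∀ k ∉ J, v k = 0) ∧ ∀ P ∈ Ps, F v ∉ P := by
  induction J using Finset.induction_on generalizing F with
  | empty =>
    refine ⟨0, fun _ _ => rfl, fun P hP => ?_⟩
    obtain ⟨v, hv, hvP⟩ := h P hP
    rwa [funext fun k => hv k (Finset.notMem_empty k)] at hvP
  | insert j J hj ih =>
    choose! w hw hwP using h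
    obtain ⟨ξ, hξ⟩ := exists_forall_add_mul_notMem Ps hp (fun P => F (Function.update (w P) j 0))
      (fun P => F (Function.update (w P) j 1) - F (Function.update (w P) j 0)) fun P hP => by
        by_contra! hmem
        have hval := hF j (Finset.mem_insert_self j J) (w P) (w P j)
        rw [Function.update_eq_self] at hval
        exact hwP P hP (hval ▸ P.add_mem hmem.1 (P.mul_mem_left _ hmem.2))
    obtain ⟨v, hv, hvP⟩ := ih (fun v => F (Function.update v j ξ))
      (fun i hi v t => by
        have hij : i ≠ j := ne_of_mem_of_not_mem hi hj
        simp only [Function.update_comm hij]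
        exact hF i (Finset.mem_insert_of_mem hi) _ t)
      fun P hP => ⟨Function.update (w P) j 0, fun k hk => by
        obtain rfl | hkj := eq_or_ne k j
        · exact Function.update_self ..
        · rw [Function.update_of_ne hkj]
          exact hw P hP k (by simp [hkj, hk]), by
        rw [Function.update_idem, hF j (Finset.mem_insert_self j J)]
        exact hξ P hP⟩
    refine ⟨Function.update v j ξ, fun k hk => ?_, hvP⟩
    rw [Finset.mem_insert, not_or] at hk
    rw [Function.update_of_ne hk.1, hv k hk.2]

/-- The prime avoidance argument behind stable range: elements chosen one after another
outside the minimal primes of what has been chosen so far cut out large height. -/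
theorem exists_forall_card_le_height [IsNoetherianRing R] {ι : Type*} (y : R)
    (J : Finset ι) (G : ι → Set R)
    (hG : ∀ i, ∀ Ps : Finset (Ideal R), (∀ P ∈ Ps, P.IsPrime ∧ y ∉ P) →
      ∃ x ∈ G i, ∀ P ∈ Ps, x ∉ P) :
    ∃ x : ι → R, (∀ i, x i ∈ G i) ∧ ∀ P : Ideal R, P.IsPrime → y ∉ P →
      (∀ i ∈ J, x i ∈ P) → (J.card : ℕ∞) ≤ P.height := by
  classical
  induction J using Finset.induction_on with
  | empty =>
    choose x hx _ using fun i => hG i ∅ (by simp)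
    exact ⟨x, hx, by simp⟩
  | insert j J hj ih =>
    obtain ⟨x, hx, hheight⟩ := ih
    have hfin := (Ideal.span (x '' J)).finite_minimalPrimes_of_isNoetherianRing
    obtain ⟨z, hz, hzP⟩ := hG j (hfin.toFinset.filter (y ∉ ·)) fun P hP => by
      rw [Finset.mem_filter, Set.Finite.mem_toFinset] at hP
      exact ⟨hP.1.1.1, hP.2⟩
    refine ⟨Function.update x j z, fun i => ?_, fun P hP hyP hmem => ?_⟩
    · obtain rfl | hij := eq_or_ne i j
      · rwa [Function.update_self]
      · rw [Function.update_of_ne hij]; exact hx i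
    have hKP : Ideal.span (x '' J) ≤ P := Ideal.span_le.2 <| by
      rintro _ ⟨i, hi, rfl⟩
      rw [← Function.update_of_ne (ne_of_mem_of_not_mem hi hj) z x]
      exact hmem i (Finset.mem_insert_of_mem hi)
    obtain ⟨Q, hQ, hQP⟩ := Ideal.exists_minimalPrimes_le hKP
    have hQprime : Q.IsPrime := hQ.1.1
    have hyQ : y ∉ Q := fun h => hyP (hQP h)
    have hJQ : (J.card : ℕ∞) ≤ Q.height :=
      hheight Q hQprime hyQ fun i hi => hQ.1.2 (Ideal.subset_span ⟨i, hi, rfl⟩)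
    have hlt : Q < P := lt_of_le_of_ne hQP <| by
      rintro rfl
      refine hzP Q (by simp [hQ, hyQ]) ?_
      simpa using hmem j (Finset.mem_insert_self j J)
    rw [Finset.card_insert_of_notMem hj, Nat.cast_succ]
    exact (add_le_add_left hJQ 1).trans (Ideal.height_add_one_le_of_lt_of_isPrime hlt)

theorem exists_forall_card_le_height_add_mul [IsNoetherianRing R] {ι : Type*} (a : ι → R) (y : R)
    (J : Finset ι) :
    ∃ τ : ι → R, ∀ P : Ideal R, P.IsPrime → y ∉ P → (∀ i ∈ J, a i + τ i * y ∈ P) →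
      (J.card : ℕ∞) ≤ P.height := by
  obtain ⟨x, hx, hheight⟩ := exists_forall_card_le_height y J
    (fun i => Set.range fun ξ => a i + ξ * y) fun i Ps hPs => by
      obtain ⟨ξ, hξ⟩ := exists_forall_add_mul_notMem Ps (fun P hP => (hPs P hP).1) (fun _ => a i)
        (fun _ => y) fun P hP => .inr (hPs P hP).2
      exact ⟨_, ⟨ξ, rfl⟩, hξ⟩
  choose τ hτ using hx
  obtain rfl : (fun i => a i + τ i * y) = x := funext hτ
  exact ⟨τ, hheight⟩

theorem exists_span_range_eq_top [IsNoetherianRing R] {m : ℕ}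
    (hm : ∀ P : Ideal R, P.IsPrime → P.height ≤ m) (G : Set R)
    (hG : ∀ Ps : Finset (Ideal R), (∀ P ∈ Ps, P.IsPrime) → ∃ x ∈ G, ∀ P ∈ Ps, x ∉ P) :
    ∃ x : Fin (m + 1) → R, (∀ i, x i ∈ G) ∧ Ideal.span (Set.range x) = ⊤ := by
  obtain ⟨x, hx, hheight⟩ := exists_forall_card_le_height 1 Finset.univ
    (fun _ : Fin (m + 1) => G) fun _ Ps hPs => hG Ps fun P hP => (hPs P hP).1
  refine ⟨x, hx, by_contra fun hne => ?_⟩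
  obtain ⟨P, hP, hle⟩ := Ideal.exists_le_maximal _ hne
  have hcard := (hheight P hP.isPrime (P.ne_top_iff_one.1 hP.ne_top) fun i _ =>
    hle (Ideal.subset_span ⟨i, rfl⟩)).trans (hm P hP.isPrime)
  rw [Finset.card_univ, Fintype.card_fin, Nat.cast_le] at hcard
  omega

theorem exists_mem_of_forall_prime (S : Submonoid R) (K : Ideal R)
    (h : ∀ P : Ideal R, P.IsPrime → Disjoint (P : Set R) S → ¬ K ≤ P) : ∃ σ ∈ S, σ ∈ K := by
  by_contra! hdisj
  obtain ⟨P, hP, hKP, hPS⟩ := K.exists_le_prime_disjoint S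
    (Set.disjoint_right.2 fun x hxS hxK => hdisj x hxS hxK)
  exact h P hP hPS hKP

end Avoidance

section StableRange

variable {R : Type*} [CommRing R] {r : ℕ}

/-- The vector with coordinate `ξ i` at `e_i`, `1 ≤ i ≤ r`, and zeros elsewhere. -/
noncomputable def posVec (ξ : Fin r → R) : Fin (2 * r + 1) → R := Function.extend posO ξ 0

/-- The vector with coordinate `ξ i` at `e_{-i}`, `1 ≤ i ≤ r`, and zeros elsewhere. -/
noncomputable def negVec (ξ : Fin r → R) : Fin (2 * r + 1) → R := posVec ξ ∘ negO r

@[simp] theorem posVec_posO (ξ : Fin r → R) (i : Fin r) : posVec ξ (posO i) = ξ i :=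
  Function.Injective.extend_apply (fun _ _ => posO_inj.1) ξ 0 i

@[simp] theorem posVec_negO_posO (ξ : Fin r → R) (i : Fin r) : posVec ξ (negO r (posO i)) = 0 :=
  Function.extend_apply' _ _ _ fun ⟨j, hj⟩ => posO_ne_negO_posO j i hj

@[simp] theorem posVec_midO (ξ : Fin r → R) : posVec ξ (midO r) = 0 :=
  Function.extend_apply' _ _ _ fun ⟨j, hj⟩ => posO_ne_midO j hj

@[simp] theorem negVec_posO (ξ : Fin r → R) (i : Fin r) : negVec ξ (posO i) = 0 :=
  posVec_negO_posO ξ i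

@[simp] theorem negVec_negO_posO (ξ : Fin r → R) (i : Fin r) :
    negVec ξ (negO r (posO i)) = ξ i := by
  simp [negVec]

@[simp] theorem negVec_midO (ξ : Fin r → R) : negVec ξ (midO r) = 0 := by
  simp [negVec]

theorem quadO_posVec (ξ : Fin r → R) : quadO r (posVec ξ) = 0 := by simp [quadO_eq]

theorem quadO_negVec (ξ : Fin r → R) : quadO r (negVec ξ) = 0 := by simp [quadO_eq]

theorem polar_posVec (ξ : Fin r → R) (y : Fin (2 * r + 1) → R) :
    polar (splitForm r R) (posVec ξ) y = ∑ i, ξ i * y (negO r (posO i)) := by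
  simp [polar_splitForm]

theorem polar_negVec (ξ : Fin r → R) (y : Fin (2 * r + 1) → R) :
    polar (splitForm r R) (negVec ξ) y = ∑ i, ξ i * y (posO i) := by
  simp [polar_splitForm, mul_comm]

theorem reach_eichler_posVec {m : Fin (2 * r + 1)} {l : Fin r}
    (hm : m = posO l ∨ m = negO r (posO l)) {ξ : Fin r → R} (hξ : ξ l = 0)
    (b : Fin (2 * r + 1) → R) :
    Reach (r - 1) b (eichler (splitForm r R) (Pi.single m 1) (posVec ξ) b) := by
  refine (Reach.eichler (J := (Finset.univ.erase l).image posO) ?_ ?_ ?_ (fun k hk => ?_) b).mono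
    (Finset.card_image_le.trans_eq (by simp))
  · rcases hm with rfl | rfl <;> simp
  · rcases hm with rfl | rfl <;> simp
  · rcases hm with rfl | rfl <;> simp
  · rcases index_cases k with rfl | ⟨i, rfl⟩ | ⟨i, rfl⟩ <;> simp_all

theorem reach_eichler_negVec {m : Fin (2 * r + 1)} {l : Fin r}
    (hm : m = posO l ∨ m = negO r (posO l)) {ξ : Fin r → R} (hξ : ξ l = 0)
    (b : Fin (2 * r + 1) → R) :
    Reach (r - 1) b (eichler (splitForm r R) (Pi.single m 1) (negVec ξ) b) := by
  refine (Reach.eichler (J := (Finset.univ.erase l).image fun i => negO r (posO i))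
    ?_ ?_ ?_ (fun k hk => ?_) b).mono (Finset.card_image_le.trans_eq (by simp))
  · rcases hm with rfl | rfl <;> simp
  · rcases hm with rfl | rfl <;> simp
  · rcases hm with rfl | rfl <;> simp
  · rcases index_cases k with rfl | ⟨i, rfl⟩ | ⟨i, rfl⟩ <;> simp_all

theorem span_range_le_of_isPrime {P : Ideal R} (hP : P.IsPrime) {b : Fin (2 * r + 1) → R}
    (hq : quadO r b = 0) (hpos : ∀ i : Fin r, b (posO i) ∈ P)
    (hneg : ∀ i : Fin r, b (negO r (posO i)) ∈ P) : Ideal.span (Set.range b) ≤ P := by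
  have hmid : b (midO r) ∈ P := by
    refine or_self_iff.1 (hP.mem_or_mem ?_)
    rw [eq_neg_of_add_eq_zero_left ((quadO_eq b).symm.trans hq)]
    exact P.neg_mem (P.sum_mem fun i _ => P.mul_mem_right _ (hpos i))
  rw [Ideal.span_le]
  rintro _ ⟨k, rfl⟩
  rcases index_cases k with rfl | ⟨i, rfl⟩ | ⟨i, rfl⟩
  exacts [hmid, hpos i, hneg i]

variable {S : Submonoid R}

theorem exists_forall_mem_of_height_lt [IsNoetherianRing R]
    (hS : ∀ P : Ideal R, P.IsPrime → Disjoint (P : Set R) S → P.height < (r - 1 : ℕ))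
    (l : Fin r) (a : Fin r → R) (y : R) :
    ∃ τ : Fin r → R, τ l = 0 ∧ ∀ P : Ideal R, P.IsPrime → Disjoint (P : Set R) S →
      (∀ i ≠ l, a i + y * τ i ∈ P) → y ∈ P := by
  obtain ⟨τ, hτ⟩ := exists_forall_card_le_height_add_mul a y (Finset.univ.erase l)
  refine ⟨Function.update τ l 0, Function.update_self .., fun P hP hPS hmem => ?_⟩
  by_contra hy
  refine (hS P hP hPS).not_ge ?_
  have hcard : (Finset.univ.erase l).card = r - 1 := by simp
  rw [← hcard]
  refine hτ P hP hy fun i hi => ?_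
  have hil := Finset.ne_of_mem_erase hi
  simpa only [Function.update_of_ne hil, mul_comm y] using hmem i hil

theorem exists_reach_meets_span_off_posO [IsNoetherianRing R]
    (hS : ∀ P : Ideal R, P.IsPrime → Disjoint (P : Set R) S → P.height < (r - 1 : ℕ))
    {b : Fin (2 * r + 1) → R} (hq : quadO r b = 0) (hb : Ideal.span (Set.range b) = ⊤) (l : Fin r) :
    ∃ d, Reach (r - 1) b d ∧ ∃ σ ∈ S, σ ∈ Ideal.span ((fun i => d (posO i)) '' {l}ᶜ) ⊔
      Ideal.span (Set.range fun i => d (negO r (posO i))) := by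
  obtain ⟨τ, hτl, hτ⟩ :=
    exists_forall_mem_of_height_lt hS l (fun i => b (negO r (posO i))) (b (posO l))
  refine ⟨_, reach_eichler_negVec (m := negO r (posO l)) (.inr rfl) hτl b,
    exists_mem_of_forall_prime S _ fun P hP hPS hle => ?_⟩
  set d := eichler (splitForm r R) (Pi.single (negO r (posO l)) 1) (negVec τ) b with hd
  have hpos (i) : d (posO i) = b (posO i) := by
    simp [hd, eichler_single_apply_of_ne]
  have hneg (i) (hi : i ≠ l) :
      d (negO r (posO i)) = b (negO r (posO i)) + b (posO l) * τ i := by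
    simp [hd, eichler_single_apply_of_ne, hi]
  have hnegl : d (negO r (posO l)) = b (negO r (posO l)) - ∑ i, τ i * b (posO i) := by
    simp [hd, eichler_single_apply_self, hτl, polar_negVec, quadO_negVec]
  have hdpos (i) (hi : i ≠ l) : b (posO i) ∈ P := by
    rw [← hpos]
    exact hle (Ideal.mem_sup_left (Ideal.subset_span ⟨i, hi, rfl⟩))
  have hdneg (i) : d (negO r (posO i)) ∈ P :=
    hle (Ideal.mem_sup_right (Ideal.subset_span ⟨i, rfl⟩))
  have hbl : b (posO l) ∈ P := hτ P hP hPS fun i hi => hneg i hi ▸ hdneg i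
  have hbpos (i) : b (posO i) ∈ P := by
    obtain rfl | hi := eq_or_ne i l
    exacts [hbl, hdpos i hi]
  refine hP.ne_top (top_le_iff.1 (hb ▸ span_range_le_of_isPrime hP hq hbpos fun i => ?_))
  have hdi := hdneg i
  obtain rfl | hi := eq_or_ne i l
  · rw [hnegl] at hdi
    exact (P.sub_mem_iff_left (P.sum_mem fun i _ => P.mul_mem_left _ (hbpos i))).1 hdi
  · rw [hneg i hi] at hdi
    exact (P.add_mem_iff_left (P.mul_mem_right _ hbl)).1 hdi

theorem exists_reach_posO_notMem [IsNoetherianRing R]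
    (hS : ∀ P : Ideal R, P.IsPrime → Disjoint (P : Set R) S → P.height < (r - 1 : ℕ))
    (hadd : ∀ a, ∀ σ ∈ S, ∃ μ, a + μ * σ ∈ S) {b : Fin (2 * r + 1) → R} (l : Fin r) {σ : R}
    (hσS : σ ∈ S) (hσ : σ ∈ Ideal.span ((fun i => b (posO i)) '' {l}ᶜ) ⊔
      Ideal.span (Set.range fun i => b (negO r (posO i)))) :
    ∃ d, Reach (r - 1) b d ∧ ∀ P : Ideal R, P.IsPrime → Disjoint (P : Set R) S →
      ∃ i : Fin r, d (posO i) ∉ P := by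
  obtain ⟨z, hz, w, hw, rfl⟩ := Submodule.mem_sup.1 hσ
  obtain ⟨β, rfl⟩ := Ideal.mem_span_range_iff_exists_fun.1 hw
  obtain ⟨μ, hμ⟩ := hadd (b (posO l)) _ hσS
  set y := b (negO r (posO l)) with hy
  obtain ⟨τ, hτl, hτ⟩ :=
    exists_forall_mem_of_height_lt hS l (fun i => b (posO i) - y * (μ * β i)) (y ^ 2)
  set c : Fin r → R := fun i => if i = l then 0 else y * τ i - μ * β i with hc
  have hcl : c l = 0 := if_pos rfl
  refine ⟨_, reach_eichler_posVec (m := posO l) (.inl rfl) hcl b, fun P hP hPS => ?_⟩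
  by_contra! hmem
  have hpos (i) (hi : i ≠ l) : b (posO i) + y * c i ∈ P := by
    simpa [eichler_single_apply_of_ne, hi, ← hy] using hmem i
  have hposl : b (posO l) - ∑ i, c i * b (negO r (posO i)) ∈ P := by
    simpa [eichler_single_apply_self, hcl, polar_posVec, quadO_posVec] using hmem l
  have hyP : y ∈ P := hP.mem_of_pow_mem 2 <| hτ P hP hPS fun i hi => by
    convert hpos i hi using 1
    rw [hc]
    simp only [if_neg hi]
    ring
  have hzP : z ∈ P := by
    refine Ideal.span_le.2 ?_ hz
    rintro _ ⟨i, hi, rfl⟩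
    exact (P.add_mem_iff_left (P.mul_mem_right _ hyP)).1 (hpos i hi)
  have hsum : ∑ i, c i * b (negO r (posO i)) + μ * ∑ i, β i * b (negO r (posO i)) ∈ P := by
    rw [Finset.mul_sum, ← Finset.sum_add_distrib]
    refine P.sum_mem fun i _ => ?_
    rw [← mul_assoc, ← add_mul]
    obtain rfl | hi := eq_or_ne i l
    · exact P.mul_mem_left _ hyP
    · refine P.mul_mem_right _ ?_
      simpa [hc, hi] using P.mul_mem_right (τ i) hyP
  refine Set.disjoint_left.1 hPS (SetLike.mem_coe.2 ?_) hμ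
  convert P.add_mem (P.add_mem hposl hsum) (P.mul_mem_left μ hzP) using 1
  ring

theorem exists_reach_meets_span_posO_off [IsNoetherianRing R]
    (hS : ∀ P : Ideal R, P.IsPrime → Disjoint (P : Set R) S → P.height < (r - 1 : ℕ))
    {b : Fin (2 * r + 1) → R} (hb : ∀ P : Ideal R, P.IsPrime → Disjoint (P : Set R) S →
      ∃ i : Fin r, b (posO i) ∉ P) (f : Fin r) :
    ∃ d, Reach (r - 1) b d ∧
      ∃ σ ∈ S, σ ∈ Ideal.span (Set.range (Function.update (fun i => d (posO i)) f 0)) := by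
  obtain ⟨τ, hτf, hτ⟩ := exists_forall_mem_of_height_lt hS f (fun i => b (posO i)) (b (posO f))
  refine ⟨_, reach_eichler_posVec (m := negO r (posO f)) (.inr rfl) hτf b,
    exists_mem_of_forall_prime S _ fun P hP hPS hle => ?_⟩
  have hpos (i) (hi : i ≠ f) : b (posO i) + b (posO f) * τ i ∈ P := by
    simpa [eichler_single_apply_of_ne, hi] using hle (Ideal.subset_span ⟨i, rfl⟩)
  have hbf : b (posO f) ∈ P := hτ P hP hPS hpos
  obtain ⟨i, hi⟩ := hb P hP hPS
  obtain rfl | hif := eq_or_ne i f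
  · exact hi hbf
  · exact hi ((P.add_mem_iff_left (P.mul_mem_right _ hbf)).1 (hpos i hif))

theorem exists_reach_posO_mem (hadd : ∀ a, ∀ σ ∈ S, ∃ μ, a + μ * σ ∈ S)
    {b : Fin (2 * r + 1) → R} (f : Fin r) {σ : R} (hσS : σ ∈ S)
    (hσ : σ ∈ Ideal.span (Set.range (Function.update (fun i => b (posO i)) f 0))) :
    ∃ d, Reach (r - 1) b d ∧ d (posO f) ∈ S := by
  obtain ⟨β, rfl⟩ := Ideal.mem_span_range_iff_exists_fun.1 hσ
  obtain ⟨μ, hμ⟩ := hadd (b (posO f)) _ hσS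
  set c : Fin r → R := Function.update (fun i => -(μ * β i)) f 0 with hc
  have hcf : c f = 0 := Function.update_self ..
  refine ⟨_, reach_eichler_negVec (m := posO f) (.inl rfl) hcf b, ?_⟩
  rw [eichler_single_apply_self (posO_ne_midO f) (negVec_posO c f), polar_negVec, quadO_negVec,
    zero_mul, sub_zero]
  convert hμ using 1
  rw [sub_eq_add_neg, Finset.mul_sum, ← Finset.sum_neg_distrib]
  congr 1
  refine Finset.sum_congr rfl fun i _ => ?_
  obtain rfl | hi := eq_or_ne i f
  · simp [hcf]
  · simp [hc, hi, mul_assoc]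

theorem exists_reach_posO_mem_of_height_lt [IsNoetherianRing R]
    (hS : ∀ P : Ideal R, P.IsPrime → Disjoint (P : Set R) S → P.height < (r - 1 : ℕ))
    (hadd : ∀ a, ∀ σ ∈ S, ∃ μ, a + μ * σ ∈ S) {b : Fin (2 * r + 1) → R} (hq : quadO r b = 0)
    (hb : Ideal.span (Set.range b) = ⊤) (f : Fin r) :
    ∃ d, Reach (4 * (r - 1)) b d ∧ d (posO f) ∈ S := by
  obtain ⟨b₁, h₁, σ, hσS, hσ⟩ := exists_reach_meets_span_off_posO hS hq hb f
  obtain ⟨b₂, h₂, hb₂⟩ := exists_reach_posO_notMem hS hadd f hσS hσ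
  obtain ⟨b₃, h₃, σ', hσS', hσ'⟩ := exists_reach_meets_span_posO_off hS hb₂ f
  obtain ⟨d, h₄, hd⟩ := exists_reach_posO_mem hadd f hσS' hσ'
  exact ⟨d, (((h₁.trans h₂).trans h₃).trans h₄).mono (by omega), hd⟩

end StableRange

section Height

open Polynomial

variable {B : Type*} [CommRing B]

theorem comap_C_ne_of_lt_of_lt {P₀ P₁ P₂ : Ideal B[X]} (h₀ : P₀.IsPrime) (h₁ : P₁.IsPrime)
    (h₂ : P₂.IsPrime) (h₀₁ : P₀ < P₁) (h₁₂ : P₁ < P₂) :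
    P₀.comap (C : B →+* B[X]) ≠ P₂.comap C := by
  intro hcomap
  have hcomap₁ : P₁.comap C = P₀.comap C :=
    ((Ideal.comap_mono h₁₂.le).trans hcomap.ge).antisymm (Ideal.comap_mono h₀₁.le)
  let p : PrimeSpectrum B := ⟨P₀.comap C, h₀.comap C⟩
  -- The fibre over `p` is the spectrum of a polynomial ring over a field.
  have hfibre : Order.krullDim (PrimeSpectrum.comap (algebraMap B B[X]) ⁻¹' {p}) ≤ 1 := by
    rw [Order.krullDim_eq_of_orderIso (PrimeSpectrum.preimageOrderIsoFiber B B[X] p),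
      ← ringKrullDim,
      ← ringKrullDim_eq_of_ringEquiv (polyEquivTensor B p.asIdeal.ResidueField).toRingEquiv]
    exact Ring.krullDimLE_iff.1 inferInstance
  rw [Order.krullDim_le_one_iff] at hfibre
  let fibrePoint (P : Ideal B[X]) (hP : P.IsPrime) (hPp : P.comap C = P₀.comap C) :
      PrimeSpectrum.comap (algebraMap B B[X]) ⁻¹' {p} := ⟨⟨P, hP⟩, PrimeSpectrum.ext hPp⟩
  rcases hfibre (fibrePoint P₁ h₁ hcomap₁) with hmin | hmax
  · exact h₀₁.not_ge (hmin (b := fibrePoint P₀ h₀ rfl) h₀₁.le)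
  · exact h₁₂.not_ge (hmax (b := fibrePoint P₂ h₂ hcomap.symm) h₁₂.le)

theorem height_map_mk_le_one {R : Type*} [CommRing R] {I P : Ideal R} (hP : P.IsPrime) (hIP : I ≤ P)
    (h : ∀ q : Ideal R, q.IsPrime → I ≤ q → q < P → q = I) :
    (P.map (Ideal.Quotient.mk I)).height ≤ 1 := by
  have hmk : Function.Surjective (Ideal.Quotient.mk I) := Ideal.Quotient.mk_surjective
  have : (P.map (Ideal.Quotient.mk I)).IsPrime :=
    Ideal.map_isPrime_of_surjective hmk (by rwa [Ideal.mk_ker])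
  have hcomap : (P.map (Ideal.Quotient.mk I)).comap (Ideal.Quotient.mk I) = P :=
    Ideal.comap_map_mk hIP
  refine mod_cast (Ideal.height_le_iff (n := 1)).2 fun q hq hqP => ?_
  have hIq : I ≤ q.comap (Ideal.Quotient.mk I) := by
    conv_lhs => rw [← Ideal.mk_ker (I := I)]
    exact Ideal.comap_mono bot_le
  have hlt : q.comap (Ideal.Quotient.mk I) < P := by
    rw [← hcomap]
    exact lt_of_le_not_ge (Ideal.comap_mono hqP.le) fun hle =>
      hqP.not_ge ((Ideal.comap_le_comap_iff_of_surjective _ hmk _ _).1 hle)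
  have hbot : q = ⊥ := by
    rw [← Ideal.map_comap_of_surjective _ hmk q, h _ (hq.comap _) hIq hlt, Ideal.map_quotient_self]
  have : Nontrivial (R ⧸ I) := Submodule.Quotient.nontrivial_iff.2 fun hI =>
    hP.ne_top (top_le_iff.1 (hI ▸ hIP))
  rw [hbot, Ideal.height_bot]
  exact zero_lt_one

variable [IsNoetherianRing B]

theorem height_le_height_comap_C_add (P : Ideal B[X]) [P.IsPrime] :
    P.height ≤ (P.comap (C : B →+* B[X])).height +
      (P.map (Ideal.Quotient.mk ((P.comap (C : B →+* B[X])).map C))).height :=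
  have : P.LiesOver (P.comap (C : B →+* B[X])) := ⟨rfl⟩
  Ideal.height_le_height_add_of_liesOver (P.comap (C : B →+* B[X])) P

theorem height_le_height_comap_C {P : Ideal B[X]} (hP : P.IsPrime)
    (h : P ≤ (P.comap (C : B →+* B[X])).map C) : P.height ≤ (P.comap (C : B →+* B[X])).height := by
  have hprime : ((P.comap (C : B →+* B[X])).map C).IsPrime := by
    rwa [← h.antisymm Ideal.map_comap_le]
  have hle := height_le_height_comap_C_add P
  rwa [Ideal.map_mk_eq_bot_of_le h, Ideal.height_bot, add_zero] at hle

theorem height_le_height_comap_C_add_one {P : Ideal B[X]} (hP : P.IsPrime) :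
    P.height ≤ (P.comap (C : B →+* B[X])).height + 1 := by
  have hprime : ((P.comap (C : B →+* B[X])).map C).IsPrime := Ideal.isPrime_map_C_of_isPrime
  refine (height_le_height_comap_C_add P).trans (add_le_add_right
    (height_map_mk_le_one hP Ideal.map_comap_le fun q hq hle hlt => ?_) _)
  by_contra hne
  refine comap_C_ne_of_lt_of_lt hprime hq hP (lt_of_le_of_ne hle (Ne.symm hne)) hlt ?_
  exact (Ideal.comap_mono Ideal.map_comap_le).antisymm Ideal.le_comap_map

end Height

section Contraction

open Polynomial

/-- There is a homotopy `Γ` of `A` from the identity (at `1`) to an endomorphism (at `0`) that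
factors through `ι : C₀ → A`, such that `f` is monic along `Γ`. -/
def IsMonicAlongContraction {C₀ A : Type*} [CommRing C₀] [CommRing A] (ι : C₀ →+* A) (f : A) :
    Prop :=
  ∃ (Γ : A →+* A[X]) (ε : A →+* C₀), (Γ f).Monic ∧
    (evalRingHom 1).comp Γ = RingHom.id A ∧ (evalRingHom 0).comp Γ = ι.comp ε

/-- A multiplicative set playing the role of the monic polynomials in `A = C₀[x₁, …, xₙ]`:
it meets every prime of height exceeding `D`, and each of its elements becomes monic along a
contraction of `A` onto `C₀`. -/
structure IsContractingSubmonoid {C₀ A : Type*} [CommRing C₀] [CommRing A] (ι : C₀ →+* A) (D : ℕ)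
    (S : Submonoid A) : Prop where
  height_le : ∀ P : Ideal A, P.IsPrime → Disjoint (P : Set A) S → P.height ≤ D
  exists_add_mul_mem : ∀ a, ∀ σ ∈ S, ∃ μ, a + μ * σ ∈ S
  isMonicAlongContraction : ∀ f ∈ S, IsMonicAlongContraction ι f

theorem height_le_of_ringKrullDim_le {A : Type*} [CommRing A] {D : ℕ}
    (hD : ringKrullDim A ≤ D) (P : Ideal A) (hP : P.IsPrime) : P.height ≤ D := by
  exact_mod_cast Ideal.height_le_ringKrullDim_of_isPrime.trans hD

theorem isContractingSubmonoid_bot {C₀ : Type*} [CommRing C₀] {D : ℕ} (hD : ringKrullDim C₀ ≤ D) :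
    IsContractingSubmonoid (RingHom.id C₀) D ⊥ where
  height_le P hP _ := height_le_of_ringKrullDim_le hD P hP
  exists_add_mul_mem a σ hσ := ⟨1 - a, by
    rw [Submonoid.mem_bot] at hσ ⊢
    rw [hσ, mul_one, add_sub_cancel]⟩
  isMonicAlongContraction f hf := ⟨C, RingHom.id C₀, by
    rw [Submonoid.mem_bot] at hf
    rw [hf, C_1]
    exact monic_one, RingHom.ext fun _ => eval_C, RingHom.ext fun _ => eval_C⟩

theorem IsMonicAlongContraction.ringEquiv {C₀ A B : Type*} [CommRing C₀] [CommRing A] [CommRing B]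
    {ι : C₀ →+* A} {f : A} (h : IsMonicAlongContraction ι f) (e : A ≃+* B) :
    IsMonicAlongContraction ((e : A →+* B).comp ι) (e f) := by
  obtain ⟨Γ, ε, hmonic, hone, hzero⟩ := h
  refine ⟨((mapRingHom (e : A →+* B)).comp Γ).comp (e.symm : B →+* A), ε.comp (e.symm : B →+* A),
    ?_, RingHom.ext fun x => ?_, RingHom.ext fun x => ?_⟩
  · simpa using hmonic.map (e : A →+* B)
  · have heval := congrArg e (DFunLike.congr_fun hone (e.symm x))
    simpa [eval_one_map] using heval
  · have heval := congrArg e (DFunLike.congr_fun hzero (e.symm x))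
    simpa [eval_zero_map] using heval

theorem IsContractingSubmonoid.ringEquiv {C₀ A B : Type*} [CommRing C₀] [CommRing A] [CommRing B]
    {ι : C₀ →+* A} {D : ℕ} {S : Submonoid A} (h : IsContractingSubmonoid ι D S) (e : A ≃+* B) :
    IsContractingSubmonoid ((e : A →+* B).comp ι) D (S.comap (e.symm : B →+* A)) where
  height_le P hP hPS := by
    rw [← e.height_comap P]
    refine h.height_le _ (hP.comap e) (Set.disjoint_left.2 fun x hx hxS => ?_)
    exact (Set.disjoint_left.1 hPS : ∀ ⦃y⦄, _ → _) hx (by simpa using hxS)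
  exists_add_mul_mem a σ hσ := by
    obtain ⟨μ, hμ⟩ := h.exists_add_mul_mem (e.symm a) (e.symm σ) hσ
    exact ⟨e μ, by simpa [Submonoid.mem_comap] using hμ⟩
  isMonicAlongContraction f hf := by
    simpa using (h.isMonicAlongContraction _ hf).ringEquiv e

theorem exists_mem_leadingCoeff_notMem_comap_C {B : Type*} [CommRing B] {P : Ideal B[X]}
    (h : ¬ P ≤ (P.comap C).map C) : ∃ g ∈ P, g.leadingCoeff ∉ P.comap C := by
  contrapose! h
  intro f
  induction hn : f.support.card using Nat.strong_induction_on generalizing f with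
  | h n ih =>
    intro hf
    rcases eq_or_ne f 0 with rfl | hf0
    · exact zero_mem _
    have hlead : C f.leadingCoeff * X ^ f.natDegree ∈ (P.comap C).map C :=
      Ideal.mul_mem_right _ _ (Ideal.mem_map_of_mem C (h f hf))
    have herase : f.eraseLead ∈ P := by
      rw [← self_sub_C_mul_X_pow]
      exact P.sub_mem hf (P.mul_mem_right _ (h f hf))
    rw [← f.eraseLead_add_C_mul_X_pow]
    exact add_mem (ih _ (hn ▸ eraseLead_support_card_lt hf0) rfl herase) hlead

/-- The polynomials with a leading coefficient in `S`. When `0 ∈ S` these are all polynomials,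
so the coefficient is taken at any degree bound. -/
def leadSubmonoid {B : Type*} [CommRing B] (S : Submonoid B) : Submonoid B[X] where
  carrier := {f | ∃ d, f.natDegree ≤ d ∧ f.coeff d ∈ S}
  one_mem' := ⟨0, natDegree_one.le, by rw [coeff_one_zero]; exact S.one_mem⟩
  mul_mem' := by
    rintro f g ⟨d, hd, hdS⟩ ⟨e, he, heS⟩
    refine ⟨d + e, natDegree_mul_le_of_le hd he, ?_⟩
    rw [coeff_mul_add_eq_of_natDegree_le hd he]
    exact S.mul_mem hdS heS

theorem mem_leadSubmonoid {B : Type*} [CommRing B] {S : Submonoid B} {f : B[X]} :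
    f ∈ leadSubmonoid S ↔ ∃ d, f.natDegree ≤ d ∧ f.coeff d ∈ S := Iff.rfl

theorem disjoint_comap_C_of_disjoint_leadSubmonoid {B : Type*} [CommRing B] {S : Submonoid B}
    {P : Ideal B[X]} (hPS : Disjoint (P : Set B[X]) (leadSubmonoid S)) :
    Disjoint ((P.comap C : Ideal B) : Set B) S := by
  rw [Set.disjoint_left] at hPS ⊢
  exact fun x hx hxS => hPS (a := C x) hx ⟨0, (natDegree_C x).le, by rwa [coeff_C_zero]⟩

theorem disjoint_sup_span_leadingCoeff {B : Type*} [CommRing B] {S : Submonoid B}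
    {P : Ideal B[X]} (hPS : Disjoint (P : Set B[X]) (leadSubmonoid S)) {g : B[X]} (hg : g ∈ P) :
    Disjoint ((P.comap C ⊔ Ideal.span {g.leadingCoeff} : Ideal B) : Set B) S := by
  rw [Set.disjoint_left] at hPS ⊢
  intro σ hσ hσS
  obtain ⟨z, hz, y, hy, rfl⟩ := Submodule.mem_sup.1 hσ
  obtain ⟨c, rfl⟩ := Ideal.mem_span_singleton'.1 hy
  refine hPS (a := C c * g + C z * X ^ g.natDegree)
    (P.add_mem (P.mul_mem_left _ hg) (P.mul_mem_right _ hz))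
    ⟨g.natDegree, natDegree_add_le_of_degree_le (natDegree_C_mul_le _ _)
      (natDegree_C_mul_X_pow_le _ _), ?_⟩
  rwa [coeff_add, coeff_C_mul, coeff_C_mul, coeff_X_pow_self, mul_one, coeff_natDegree, add_comm]

theorem height_le_of_disjoint_leadSubmonoid {B : Type*} [CommRing B] [IsNoetherianRing B]
    {S : Submonoid B} {D : ℕ}
    (hS : ∀ P : Ideal B, P.IsPrime → Disjoint (P : Set B) S → P.height ≤ D)
    {P : Ideal B[X]} (hP : P.IsPrime) (hPS : Disjoint (P : Set B[X]) (leadSubmonoid S)) :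
    P.height ≤ D := by
  by_cases hle : P ≤ (P.comap C).map C
  · exact (height_le_height_comap_C hP hle).trans
      (hS _ (hP.comap C) (disjoint_comap_C_of_disjoint_leadSubmonoid hPS))
  obtain ⟨g, hg, hgP⟩ := exists_mem_leadingCoeff_notMem_comap_C hle
  obtain ⟨Q, hQ, hle, hQS⟩ :=
    Ideal.exists_le_prime_disjoint _ S (disjoint_sup_span_leadingCoeff hPS hg)
  have hlt : P.comap C < Q :=
    lt_of_le_of_ne (le_sup_left.trans hle) fun heq =>
      hgP (heq ▸ hle (Ideal.mem_sup_right (Ideal.mem_span_singleton_self _)))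
  have := hP.comap (C : B →+* B[X])
  exact (height_le_height_comap_C_add_one hP).trans
    ((Ideal.height_add_one_le_of_lt_of_isPrime hlt).trans (hS Q hQ hQS))

theorem exists_add_mul_mem_leadSubmonoid {B : Type*} [CommRing B] {S : Submonoid B} (a : B[X])
    {σ : B[X]} (hσ : σ ∈ leadSubmonoid S) : ∃ μ, a + μ * σ ∈ leadSubmonoid S := by
  obtain ⟨d, hd, hdS⟩ := hσ
  refine ⟨X ^ (a.natDegree + 1), a.natDegree + 1 + d,
    natDegree_add_le_of_degree_le (by lia) (natDegree_mul_le_of_le (natDegree_X_pow_le _) hd), ?_⟩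
  rwa [coeff_add, coeff_eq_zero_of_natDegree_lt (by lia), zero_add, add_comm _ d, coeff_X_pow_mul]

theorem monic_sum_mul_pow {A : Type*} [CommRing A] {d N : ℕ} {a : ℕ → A[X]} {z : A[X]}
    (had : (a d).Monic) (ha : ∀ i < d, (a i).natDegree ≤ N) (hz : z.Monic) (hN : N < z.natDegree) :
    (∑ i ∈ Finset.range (d + 1), a i * z ^ i).Monic := by
  nontriviality A
  have hlead : (a d * z ^ d).Monic := had.mul (hz.pow d)
  rw [Finset.sum_range_succ, add_comm]
  refine hlead.add_of_left ?_
  have hlow : ∑ i ∈ Finset.range d, a i * z ^ i ∈ degreeLT A (d * z.natDegree) := by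
    refine Submodule.sum_mem _ fun i hi => mem_degreeLT.2 ?_
    have hid := Finset.mem_range.1 hi
    refine degree_le_natDegree.trans_lt (Nat.cast_lt.2 ?_)
    calc (a i * z ^ i).natDegree ≤ N + i * z.natDegree :=
          natDegree_mul_le_of_le (ha i hid) (natDegree_pow_le_of_le i le_rfl)
      _ < (i + 1) * z.natDegree := by rw [add_mul]; lia
      _ ≤ d * z.natDegree := Nat.mul_le_mul_right _ hid
  refine (mem_degreeLT.1 hlow).trans_le ?_
  rw [degree_eq_natDegree hlead.ne_zero, had.natDegree_mul (hz.pow d), hz.natDegree_pow]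
  exact_mod_cast Nat.le_add_left _ _

theorem isMonicAlongContraction_of_coeff {C₀ B : Type*} [CommRing C₀] [CommRing B] {ι : C₀ →+* B}
    {f : B[X]} {d : ℕ} (hd : f.natDegree ≤ d) (h : IsMonicAlongContraction ι (f.coeff d)) :
    IsMonicAlongContraction ((C : B →+* B[X]).comp ι) f := by
  obtain ⟨Γ, ε, hmonic, hone, hzero⟩ := h
  let G : B →+* B[X][X] := (mapRingHom C).comp Γ
  let N := (Finset.range d).sup fun i => (G (f.coeff i)).natDegree
  -- `z` is `X` at `1` and `0` at `0`; its degree beats the coefficients of `f` below `d`.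
  let z : B[X][X] := X ^ (N + 2) + C (X - 1) * X
  have hzdeg : (C (X - 1 : B[X]) * X).natDegree ≤ 1 :=
    (natDegree_C_mul_le _ _).trans natDegree_X_le
  have hz : z.Monic := monic_X_pow_add
    (degree_le_natDegree.trans_lt (Nat.cast_lt.2 (by lia)))
  have hG₁ (b : B) : (G b).eval 1 = C b := by
    have heval : (Γ b).eval 1 = b := DFunLike.congr_fun hone b
    simp [G, eval_one_map, heval]
  have hG₀ (b : B) : (G b).eval 0 = C (ι (ε b)) := by
    have heval : (Γ b).eval 0 = ι (ε b) := DFunLike.congr_fun hzero b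
    simp [G, eval_zero_map, heval]
  refine ⟨eval₂RingHom G z, ε.comp (evalRingHom 0), ?_, ?_, ?_⟩
  · nontriviality B
    have hznat : z.natDegree = N + 2 := by
      rw [natDegree_add_eq_left_of_natDegree_lt (by rw [natDegree_X_pow]; lia), natDegree_X_pow]
    rw [coe_eval₂RingHom, eval₂_eq_sum_range' G (Nat.lt_succ_of_le hd)]
    exact monic_sum_mul_pow (hmonic.map C)
      (fun i hi => Finset.le_sup (f := fun i => (G (f.coeff i)).natDegree) (Finset.mem_range.2 hi))
      hz (by lia)
  · refine Polynomial.ringHom_ext (fun b => ?_) ?_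
    · simp [hG₁]
    · simp [z]
  · refine Polynomial.ringHom_ext (fun b => ?_) ?_
    · simp [hG₀]
    · simp [z]

theorem IsContractingSubmonoid.polynomial {C₀ B : Type*} [CommRing C₀] [CommRing B]
    [IsNoetherianRing B] {ι : C₀ →+* B} {D : ℕ} {S : Submonoid B}
    (h : IsContractingSubmonoid ι D S) :
    IsContractingSubmonoid ((C : B →+* B[X]).comp ι) D (leadSubmonoid S) where
  height_le _ hP hPS := height_le_of_disjoint_leadSubmonoid h.height_le hP hPS
  exists_add_mul_mem a _ hσ := exists_add_mul_mem_leadSubmonoid a hσ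
  isMonicAlongContraction _ := fun ⟨_, hd, hdS⟩ =>
    isMonicAlongContraction_of_coeff hd (h.isMonicAlongContraction _ hdS)

theorem exists_isContractingSubmonoid_mvPolynomial {C₀ : Type*} [CommRing C₀] [IsNoetherianRing C₀]
    {D : ℕ} (hD : ringKrullDim C₀ ≤ D) (n : ℕ) :
    ∃ (ι : C₀ →+* MvPolynomial (Fin n) C₀) (S : Submonoid (MvPolynomial (Fin n) C₀)),
      IsContractingSubmonoid ι D S := by
  induction n with
  | zero =>
    exact ⟨_, _, (isContractingSubmonoid_bot hD).ringEquiv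
      (MvPolynomial.isEmptyRingEquiv C₀ (Fin 0)).symm⟩
  | succ n ih =>
    obtain ⟨ι, S, h⟩ := ih
    exact ⟨_, _, h.polynomial.ringEquiv (MvPolynomial.finSuccEquiv C₀ n).symm.toRingEquiv⟩

end Contraction

section Homotopy

open Polynomial

variable {A : Type*} [CommRing A] {r : ℕ}

theorem finite_setOf_isPrime_mem_comap_C_mem [IsNoetherianRing A] {f : A[X]} (hf : f.Monic)
    (Ps : Finset (Ideal A)) :
    {Q : Ideal A[X] | Q.IsPrime ∧ f ∈ Q ∧ Q.comap (C : A →+* A[X]) ∈ Ps}.Finite := by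
  refine Set.Finite.subset (Set.Finite.biUnion Ps.finite_toSet fun p _ =>
    (p.map C ⊔ Ideal.span {f}).finite_minimalPrimes_of_isNoetherianRing) ?_
  rintro Q ⟨hQ, hfQ, hQP⟩
  refine Set.mem_biUnion hQP ⟨⟨hQ, sup_le Ideal.map_comap_le
    ((Ideal.span_singleton_le_iff_mem _).2 hfQ)⟩, ?_⟩
  rintro Q' ⟨hQ', hle⟩ hQQ'
  by_contra hQ'Q
  obtain ⟨x, hx, hx'⟩ := SetLike.not_le_iff_exists.1 hQ'Q
  have hfQ' : f ∈ Q' := hle (Ideal.mem_sup_right (Ideal.mem_span_singleton_self f))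
  obtain ⟨p, hpm, hp⟩ := hf.quotient_isIntegral hfQ' (Ideal.Quotient.mk Q' x)
  have hpx : eval₂ (C : A →+* A[X]) x p ∈ Q' := by
    rw [← Ideal.Quotient.eq_zero_iff_mem, ← hp, hom_eval₂]
    rfl
  have := hQ'.comap (C : A →+* A[X])
  exact (Ideal.comap_lt_comap_of_root_mem_sdiff hQQ' ⟨hx, hx'⟩ (hpm.map _).ne_zero hpx).not_ge
    (Ideal.map_le_iff_le_comap.1 (le_sup_left.trans hle))

theorem not_comap_C_span_pair_le {f g : A[X]} (hf : f.Monic) {p : Ideal A} (hp : p.IsPrime)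
    (h : ∀ Q : Ideal A[X], Q.IsPrime → f ∈ Q → Q.comap (C : A →+* A[X]) = p → g ∉ Q) :
    ¬ (Ideal.span {f, g}).comap (C : A →+* A[X]) ≤ p := by
  intro hle
  have : Module.Finite A (AdjoinRoot f) := hf.finite_adjoinRoot
  have hcomap : (Ideal.span {AdjoinRoot.mk f g}).comap (algebraMap A (AdjoinRoot f)) ≤ p := by
    intro x hx
    refine hle (Ideal.mem_comap.2 (Ideal.mem_span_pair.2 ?_))
    obtain ⟨y, hy⟩ := Ideal.mem_span_singleton'.1 (Ideal.mem_comap.1 hx)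
    obtain ⟨y, rfl⟩ := AdjoinRoot.mk_surjective y
    rw [AdjoinRoot.algebraMap_eq, ← AdjoinRoot.mk_C, ← map_mul, AdjoinRoot.mk_eq_mk] at hy
    obtain ⟨z, hz⟩ := hy
    exact ⟨-z, y, by linear_combination hz⟩
  obtain ⟨Q, hQ, hQp, hQc⟩ := Ideal.exists_ideal_over_prime_of_isIntegral p _ hcomap
  refine h (Q.comap (AdjoinRoot.mk f)) (hQp.comap _) ?_ ?_
    (hQ (Ideal.mem_span_singleton_self _))
  · rw [Ideal.mem_comap, AdjoinRoot.mk_self]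
    exact Q.zero_mem
  · rw [← hQc, AdjoinRoot.algebraMap_eq, Ideal.comap_comap]
    rfl

theorem exists_mem_nonZeroDivisors_forall_notMem [IsNoetherianRing A] {J : Ideal A}
    {Ps : Finset (Ideal A)} (hPs : ∀ P ∈ Ps, P.IsPrime)
    (hass : (associatedPrimes A A) ⊆ Ps) (hJ : ∀ P ∈ Ps, ¬ J ≤ P) :
    ∃ s ∈ J, s ∈ nonZeroDivisors A ∧ ∀ P ∈ Ps, s ∉ P := by
  have hunion : ¬ (J : Set A) ⊆ ⋃ P ∈ (Ps : Set (Ideal A)), (P : Set A) := fun hsub => by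
    obtain ⟨P, hP, hle⟩ := (Ideal.subset_union_prime (f := id) ⊥ ⊥ fun P hP _ _ => hPs P hP).1 hsub
    exact hJ P hP hle
  obtain ⟨s, hsJ, hs⟩ := Set.not_subset.1 hunion
  refine ⟨s, hsJ, by_contra fun hs' => hs ?_, fun P hP hsP => hs (Set.mem_biUnion hP hsP)⟩
  rw [← SetLike.mem_coe, ← Set.mem_compl_iff, ← biUnion_associatedPrimes_eq_compl_nonZeroDivisors]
    at hs'
  exact Set.biUnion_subset_biUnion_left hass hs'

theorem monic_add_X_pow_mul_of_natDegree_lt {f g : A[X]} {N : ℕ} (hg : g.Monic)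
    (hN : f.natDegree < N) : (f + X ^ N * g).Monic := by
  nontriviality A
  have hm : (X ^ N * g).Monic := (monic_X_pow N).mul hg
  refine hm.add_of_right (degree_le_natDegree.trans_lt ?_)
  rw [degree_eq_natDegree hm.ne_zero, (monic_X_pow N).natDegree_mul hg, natDegree_X_pow]
  exact_mod_cast Nat.lt_add_right _ hN

theorem exists_notMem_of_posO_mem_of_negO_mem {R : Type*} [CommRing R] {P : Ideal R}
    (hP : P.IsPrime) {b : Fin (2 * r + 1) → R} (hq : quadO r b = 0)
    (hb : Ideal.span (Set.range b) = ⊤) {c : Fin r} (hp : b (posO c) ∈ P)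
    (hn : b (negO r (posO c)) ∈ P) :
    ∃ k, k ≠ midO r ∧ k ≠ posO c ∧ k ≠ negO r (posO c) ∧ b k ∉ P := by
  by_contra! hmem
  refine hP.ne_top (top_le_iff.1 (hb ▸ span_range_le_of_isPrime hP hq (fun i => ?_) fun i => ?_))
  · obtain rfl | hi := eq_or_ne i c
    exacts [hp, hmem _ (by simp) (by simpa using hi) (by simp)]
  · obtain rfl | hi := eq_or_ne i c
    exacts [hn, hmem _ (by simp) (by simp) (by simpa using hi)]

theorem exists_reach_monic [IsNoetherianRing A] {b : Fin (2 * r + 1) → A[X]} (hq : quadO r b = 0)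
    (hb : Ideal.span (Set.range b) = ⊤) {a c : Fin r} (hac : a ≠ c) (hm : (b (posO a)).Monic)
    (Ps : Finset (Ideal A)) :
    ∃ d, Reach 1 b d ∧ (d (posO c)).Monic ∧ ∀ P : Ideal A[X], P.IsPrime → d (posO c) ∈ P →
      P.comap (C : A →+* A[X]) ∈ Ps →
      ∃ k, k ≠ midO r ∧ k ≠ posO c ∧ k ≠ negO r (posO c) ∧ d k ∉ P := by
  classical
  have hfin := finite_setOf_isPrime_mem_comap_C_mem hm Ps
  obtain ⟨ζ₀, hζ₀⟩ := exists_forall_add_mul_notMem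
    (hfin.toFinset.filter (b (negO r (posO c)) ∉ ·))
    (fun P hP => ((Set.Finite.mem_toFinset _).1 (Finset.mem_filter.1 hP).1).1)
    (fun _ => b (negO r (posO a))) (fun _ => b (negO r (posO c)))
    fun P hP => .inr (Finset.mem_filter.1 hP).2
  set N := (b (posO c) - ζ₀ * b (posO a)).natDegree + 1
  set ζ := ζ₀ - X ^ N * b (posO a) with hζ
  set d := eichler (splitForm r A[X]) (Pi.single (posO c) 1)
    (Pi.single (negO r (posO a)) ζ) b with hd
  have hdc : d (posO c) =
      b (posO c) - ζ₀ * b (posO a) + X ^ N * (b (posO a) * b (posO a)) := by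
    rw [hd, eichler_single_apply_self (by simp) (by simp), polar_single (by simp),
      quadO_single (by simp), negO_negO, hζ]
    ring
  have hda : d (negO r (posO a)) = b (negO r (posO a)) + b (negO r (posO c)) * ζ := by
    rw [hd, eichler_single_apply_of_ne (by simp) (by simp), Pi.single_eq_same]
  have hdk (k) (hkc : k ≠ posO c) (hka : k ≠ negO r (posO a)) : d k = b k := by
    rw [hd, eichler_single_apply_of_ne (by simp) hkc, Pi.single_eq_of_ne hka, mul_zero, add_zero]
  have hbd : Reach 1 b d := ⟨_, toMatrix'_eichler_single_mem_EOO (posO_ne_midO c) (by simp)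
    (by simpa using hac) ζ, LinearMap.toMatrix'_mulVec _ _⟩
  refine ⟨d, hbd, hdc ▸ monic_add_X_pow_mul_of_natDegree_lt (hm.mul hm) (Nat.lt_succ_self _),
    fun P hP hcP hPs => ?_⟩
  by_contra! hmem
  have haP : b (posO a) ∈ P := by
    rw [← hdk _ (by simpa using hac) (by simp)]
    exact hmem _ (by simp) (by simpa using hac) (by simp)
  have hncP : b (negO r (posO c)) ∉ P := fun hnc => by
    have hdncP : d (negO r (posO c)) ∈ P := by rwa [hdk _ (by simp) (by simpa using hac.symm)]
    obtain ⟨k, hk₀, hkc, hkc', hkP⟩ := exists_notMem_of_posO_mem_of_negO_mem hP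
      (hbd.quadO_eq.trans hq) (hbd.span_range_eq.trans hb) hcP hdncP
    exact hkP (hmem k hk₀ hkc hkc')
  refine hζ₀ P (Finset.mem_filter.2 ⟨(Set.Finite.mem_toFinset _).2 ⟨hP, haP, hPs⟩, hncP⟩) ?_
  have hnaP : d (negO r (posO a)) ∈ P := hmem _ (by simp) (by simp) (by simpa using hac)
  convert P.add_mem hnaP (P.mul_mem_left (b (negO r (posO c)) * X ^ N) haP) using 1
  rw [hda, hζ]
  ring

theorem card_compl_quadruple_erase_midO {i j : Fin r} (hij : i ≠ j) :
    (({posO i, negO r (posO i), posO j, negO r (posO j)}ᶜ : Finset (Fin (2 * r + 1))).erase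
      (midO r)).card = 2 * (r - 2) := by
  rw [Finset.card_erase_of_mem (by simp [(posO_ne_midO _).symm, (negO_posO_ne_midO _).symm]),
    card_compl_quadruple hij, Nat.add_sub_cancel]

theorem exists_sub_polar_sub_quadO_mul_notMem {R : Type*} [CommRing R] {P : Ideal R} {a c d : Fin r}
    (hac : a ≠ c) (had : a ≠ d) {b : Fin (2 * r + 1) → R}
    (hb : ∃ k, k ≠ midO r ∧ k ≠ posO c ∧ k ≠ negO r (posO c) ∧ b k ∉ P) :
    ∃ v : Fin (2 * r + 1) → R,
      (∀ k ∉ ({posO c, negO r (posO c), posO d, negO r (posO d)}ᶜ : Finset _).erase (midO r),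
        v k = 0) ∧
      b (posO d) - polar (splitForm r R) v b - quadO r v * b (negO r (posO d)) ∉ P := by
  by_cases hbd : b (posO d) ∈ P
  swap
  · exact ⟨0, fun _ _ => rfl, by simpa [← splitForm_apply] using hbd⟩
  by_cases hbJ : ∃ k, k ≠ midO r ∧ k ≠ posO c ∧ k ≠ negO r (posO c) ∧ k ≠ posO d ∧
      k ≠ negO r (posO d) ∧ b k ∉ P
  · obtain ⟨k, hk, hkc, hknc, hkd, hknd, hkP⟩ := hbJ
    refine ⟨Pi.single (negO r k) 1, fun l hl => Pi.single_eq_of_ne ?_ _, ?_⟩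
    · rintro rfl
      exact hl (by simp [negO_eq_iff, *])
    · simpa [polar_single (negO_ne_midO hk), quadO_single (negO_ne_midO hk),
        P.sub_mem_iff_right hbd] using hkP
  · push Not at hbJ
    have haP : b (posO a) ∈ P := hbJ _ (by simp) (by simpa) (by simp) (by simpa) (by simp)
    have hnaP : b (negO r (posO a)) ∈ P :=
      hbJ _ (by simp) (by simp) (by simpa) (by simp) (by simpa)
    have hndP : b (negO r (posO d)) ∉ P := by
      obtain ⟨k, hk, hkc, hknc, hkP⟩ := hb
      contrapose! hkP
      by_cases hkd : k = posO d
      · rwa [hkd]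
      by_cases hknd : k = negO r (posO d)
      · rwa [hknd]
      exact hbJ k hk hkc hknc hkd hknd
    refine ⟨Pi.single (posO a) 1 + Pi.single (negO r (posO a)) 1, fun l hl => ?_, ?_⟩
    · have hla : l ≠ posO a := by rintro rfl; simp [hac, had] at hl
      have hlna : l ≠ negO r (posO a) := by rintro rfl; simp [hac, had] at hl
      simp [hla, hlna]
    · simpa [polar_add_left, polar_single, quadO_add_single, quadO_single,
        P.sub_mem_iff_right (P.sub_mem hbd (P.add_mem hnaP haP))] using hndP

theorem exists_reach_forall_notMem {R : Type*} [CommRing R] (Ps : Finset (Ideal R))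
    (hPs : ∀ P ∈ Ps, P.IsPrime) {a c d : Fin r} (hac : a ≠ c) (had : a ≠ d) (hcd : c ≠ d)
    {b : Fin (2 * r + 1) → R}
    (hb : ∀ P ∈ Ps, ∃ k, k ≠ midO r ∧ k ≠ posO c ∧ k ≠ negO r (posO c) ∧ b k ∉ P) :
    ∃ b', Reach (2 * (r - 2)) b b' ∧ b' (posO c) = b (posO c) ∧ ∀ P ∈ Ps, b' (posO d) ∉ P := by
  let F (v : Fin (2 * r + 1) → R) : R :=
    b (posO d) - polar (splitForm r R) v b - quadO r v * b (negO r (posO d))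
  obtain ⟨v, hv, hvP⟩ := exists_forall_notMem_of_multiaffine
    (({posO c, negO r (posO c), posO d, negO r (posO d)}ᶜ : Finset _).erase (midO r)) F
    (fun j hj v t => by
      have hjmid : j ≠ midO r := Finset.ne_of_mem_erase hj
      have hupd (t : R) : Function.update v j t = Function.update v j 0 + Pi.single j t := by
        ext k
        obtain rfl | hk := eq_or_ne k j <;> simp [*]
      simp only [F, hupd t, hupd 1, quadO_add_single hjmid, polar_add_left, polar_single hjmid]
      ring)
    Ps hPs fun P hP => exists_sub_polar_sub_quadO_mul_notMem hac had (hb P hP)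
  refine ⟨_, (Reach.eichler (posO_ne_midO d) (by simp) (by simp) hv b).mono
    (card_compl_quadruple_erase_midO hcd).le, ?_, fun P hP => ?_⟩
  · rw [eichler_single_apply_of_ne (by simp) (by simpa using hcd), hv _ (by simp), mul_zero,
      add_zero]
  · rw [eichler_single_apply_self (by simp) (hv _ (by simp))]
    exact hvP P hP

theorem exists_reach_comap_C_span_pair [IsNoetherianRing A] {b : Fin (2 * r + 1) → A[X]}
    (hq : quadO r b = 0) (hb : Ideal.span (Set.range b) = ⊤) {a c d : Fin r} (hac : a ≠ c)
    (had : a ≠ d) (hcd : c ≠ d) (hm : (b (posO a)).Monic) {Ps : Finset (Ideal A)}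
    (hPs : ∀ P ∈ Ps, P.IsPrime) :
    ∃ b', Reach (1 + 2 * (r - 2)) b b' ∧
      ∀ P ∈ Ps, ¬ (Ideal.span {b' (posO c), b' (posO d)}).comap (C : A →+* A[X]) ≤ P := by
  obtain ⟨b₁, hbb₁, hmonic, hb₁⟩ := exists_reach_monic hq hb hac hm Ps
  have hfin := finite_setOf_isPrime_mem_comap_C_mem hmonic Ps
  obtain ⟨b₂, hb₁b₂, hc, hd⟩ := exists_reach_forall_notMem hfin.toFinset
    (fun Q hQ => ((Set.Finite.mem_toFinset _).1 hQ).1) hac had hcd fun Q hQ => by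
      obtain ⟨hQprime, hcQ, hQPs⟩ := (Set.Finite.mem_toFinset _).1 hQ
      exact hb₁ Q hQprime hcQ hQPs
  refine ⟨b₂, hbb₁.trans hb₁b₂, fun P hP => ?_⟩
  rw [hc]
  exact not_comap_C_span_pair_le hmonic (hPs P hP) fun Q hQ hcQ hQP =>
    hd Q ((Set.Finite.mem_toFinset _).2 ⟨hQ, hcQ, hQP ▸ hP⟩)

theorem exists_forall_reach_evalRingHom [IsNoetherianRing A] {b : Fin (2 * r + 1) → A[X]}
    (hq : quadO r b = 0) (hb : Ideal.span (Set.range b) = ⊤) {a c d : Fin r} (hac : a ≠ c)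
    (had : a ≠ d) (hcd : c ≠ d) (hm : (b (posO a)).Monic) {Ps : Finset (Ideal A)}
    (hPs : ∀ P ∈ Ps, P.IsPrime) :
    ∃ s : A, (∀ t₀ t₁, s ^ 6 ∣ t₁ - t₀ →
      Reach (8 * r + 4) (evalRingHom t₀ ∘ b) (evalRingHom t₁ ∘ b)) ∧ ∀ P ∈ Ps, s ∉ P := by
  classical
  have hass := associatedPrimes.finite A A
  have hQs : ∀ P ∈ Ps ∪ hass.toFinset, P.IsPrime := fun P hP =>
    (Finset.mem_union.1 hP).elim (hPs P) fun hP => ((Set.Finite.mem_toFinset _).1 hP).isPrime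
  obtain ⟨b', hbb', hb'⟩ := exists_reach_comap_C_span_pair hq hb hac had hcd hm hQs
  obtain ⟨s, hs, hsA, hsPs⟩ := exists_mem_nonZeroDivisors_forall_notMem hQs (by simp) hb'
  refine ⟨s, fun t₀ t₁ ht => ?_, fun P hP => hsPs P (Finset.mem_union_left _ hP)⟩
  obtain ⟨x, y, hxy⟩ := Ideal.mem_span_pair.1 (Ideal.mem_comap.1 hs)
  have heval (t : A) : x.eval t * (evalRingHom t ∘ b') (posO c) +
      y.eval t * (evalRingHom t ∘ b') (posO d) = s := by
    simpa using congrArg (eval t) hxy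
  have hqeval (t : A) : quadO r (evalRingHom t ∘ b') = 0 := by
    rw [quadO_map, hbb'.quadO_eq, hq, map_zero]
  have hcongr := reach_of_dvd_sub hcd hac.symm had.symm (heval t₀) (heval t₁) hsA
    ((hqeval t₁).trans (hqeval t₀).symm) fun l => ht.trans (sub_dvd_eval_sub t₁ t₀ (b' l))
  have hr : 2 ≤ r := by have := Fin.val_ne_of_ne hcd; lia
  exact (((hbb'.map (evalRingHom t₀)).trans hcongr).trans
    (hbb'.map (evalRingHom t₁)).symm).mono (by lia)

theorem reach_evalRingHom_one_zero [IsNoetherianRing A] {m : ℕ}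
    (hA : ∀ P : Ideal A, P.IsPrime → P.height ≤ m) {b : Fin (2 * r + 1) → A[X]}
    (hq : quadO r b = 0) (hb : Ideal.span (Set.range b) = ⊤) (hr : 3 ≤ r) {a : Fin r}
    (hm : (b (posO a)).Monic) :
    Reach ((m + 1) * (8 * r + 4)) (evalRingHom 1 ∘ b) (evalRingHom 0 ∘ b) := by
  obtain ⟨c, hca, -⟩ := Fin.exists_ne_and_ne_of_two_lt a a hr
  obtain ⟨d, hda, hdc⟩ := Fin.exists_ne_and_ne_of_two_lt a c hr
  obtain ⟨s, hs, hspan⟩ := exists_span_range_eq_top hA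
    {s : A | ∀ t₀ t₁, s ^ 6 ∣ t₁ - t₀ →
      Reach (8 * r + 4) (evalRingHom t₀ ∘ b) (evalRingHom t₁ ∘ b)}
    fun Ps hPs => exists_forall_reach_evalRingHom hq hb hca.symm hda.symm hdc.symm hm hPs
  have hspan6 : Ideal.span (Set.range fun i => s i ^ 6) = ⊤ := by
    simpa only [← Set.range_comp'] using Ideal.span_pow_eq_top _ hspan 6
  obtain ⟨h, hh⟩ := Ideal.mem_span_range_iff_exists_fun.1 (hspan6 ▸ Submodule.mem_top : (1 : A) ∈ _)
  have hpath (T : Finset (Fin (m + 1))) : Reach (T.card * (8 * r + 4)) (evalRingHom 1 ∘ b)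
      (evalRingHom (1 - ∑ i ∈ T, h i * s i ^ 6) ∘ b) := by
    induction T using Finset.induction_on with
    | empty => simpa using Reach.refl _ _
    | insert i T hi ih =>
      rw [Finset.card_insert_of_notMem hi, add_one_mul]
      exact ih.trans (hs i _ _ ⟨-h i, by rw [Finset.sum_insert hi]; ring⟩)
  simpa [hh] using hpath Finset.univ

end Homotopy

section Columns

variable {A : Type*} [CommRing A] {r : ℕ}

theorem span_range_comp_eq_top {B : Type*} [CommRing B] {κ : Type*} (φ : A →+* B) {b : κ → A}
    (hb : Ideal.span (Set.range b) = ⊤) : Ideal.span (Set.range (φ ∘ b)) = ⊤ := by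
  rw [Set.range_comp, ← Ideal.map_span, hb, Ideal.map_top]

theorem exists_reach_comp_of_isMonicAlongContraction [IsNoetherianRing A] {C₀ : Type*}
    [CommRing C₀] {ι : C₀ →+* A} {m : ℕ} (hA : ringKrullDim A ≤ m) {b : Fin (2 * r + 1) → A}
    (hq : quadO r b = 0) (hb : Ideal.span (Set.range b) = ⊤) (hr : 3 ≤ r) {a : Fin r}
    (ha : IsMonicAlongContraction ι (b (posO a))) :
    ∃ c : Fin (2 * r + 1) → C₀, quadO r c = 0 ∧ Ideal.span (Set.range c) = ⊤ ∧
      Reach ((m + 1) * (8 * r + 4)) b (ι ∘ c) := by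
  obtain ⟨Γ, ε, hmonic, hone, hzero⟩ := ha
  refine ⟨ε ∘ b, by rw [quadO_map, hq, map_zero], span_range_comp_eq_top ε hb, ?_⟩
  have hpath := reach_evalRingHom_one_zero (height_le_of_ringKrullDim_le hA) (b := Γ ∘ b)
    (by rw [quadO_map, hq, map_zero]) (span_range_comp_eq_top Γ hb) hr hmonic
  have hend : Polynomial.evalRingHom 0 ∘ Γ ∘ b = ι ∘ ε ∘ b :=
    funext fun k => DFunLike.congr_fun hzero (b k)
  have hstart : Polynomial.evalRingHom 1 ∘ Γ ∘ b = b :=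
    funext fun k => DFunLike.congr_fun hone (b k)
  rwa [hstart, hend] at hpath

theorem IsContractingSubmonoid.exists_reach_posO_mem [IsNoetherianRing A] {C₀ : Type*}
    [CommRing C₀] {ι : C₀ →+* A} {D : ℕ} {S : Submonoid A} (hS : IsContractingSubmonoid ι D S)
    (hr : D + 2 ≤ r) {b : Fin (2 * r + 1) → A} (hq : quadO r b = 0)
    (hb : Ideal.span (Set.range b) = ⊤) (f : Fin r) :
    ∃ d, Reach (4 * (r - 1)) b d ∧ d (posO f) ∈ S :=
  exists_reach_posO_mem_of_height_lt (fun P hP hPS => (hS.height_le P hP hPS).trans_lt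
    (by exact_mod_cast (show D < r - 1 by lia))) hS.exists_add_mul_mem hq hb f

theorem reach_single_posO [IsNoetherianRing A] {D : ℕ} (hA : ringKrullDim A ≤ D) (hr : D + 2 ≤ r)
    {b : Fin (2 * r + 1) → A} (hq : quadO r b = 0) (hb : Ideal.span (Set.range b) = ⊤)
    (f : Fin r) : Reach (4 * (r - 1) + (2 * r - 1)) b (Pi.single (posO f) 1) := by
  obtain ⟨d, hbd, hd⟩ := (isContractingSubmonoid_bot hA).exists_reach_posO_mem hr hq hb f
  obtain ⟨E, hE, hEd, -⟩ := exists_mem_EOO_mulVec_eq_single (hbd.quadO_eq.trans hq)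
    (posO_ne_midO f) (Submonoid.mem_bot.1 hd)
  exact hbd.trans ⟨E, hE, hEd⟩

theorem reach_single_posO_mvPolynomial {C : Type*} [CommRing C] [IsNoetherianRing C] {n D : ℕ}
    (hC : ringKrullDim C ≤ D) (h3 : 3 ≤ r) (hr : D + 2 ≤ r)
    {b : Fin (2 * r + 1) → MvPolynomial (Fin n) C} (hq : quadO r b = 0)
    (hb : Ideal.span (Set.range b) = ⊤) (f : Fin r) :
    Reach ((n + D + 1) * (8 * r + 4) + 10 * r - 9) b (Pi.single (posO f) 1) := by
  obtain ⟨ι, S, hS⟩ := exists_isContractingSubmonoid_mvPolynomial hC n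
  obtain ⟨b₁, hbb₁, hf⟩ := hS.exists_reach_posO_mem hr hq hb f
  have hdim : ringKrullDim (MvPolynomial (Fin n) C) ≤ (n + D : ℕ) := by
    rw [MvPolynomial.ringKrullDim_of_isNoetherianRing, Nat.card_fin, add_comm n D]
    push_cast
    gcongr
  obtain ⟨c, hqc, hc, hb₁c⟩ := exists_reach_comp_of_isMonicAlongContraction hdim
    (hbb₁.quadO_eq.trans hq) (hbb₁.span_range_eq.trans hb) h3 (hS.isMonicAlongContraction _ hf)
  have hι : ι ∘ (Pi.single (posO f) 1 : Fin (2 * r + 1) → C) = Pi.single (posO f) 1 :=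
    funext fun k => by simp [Pi.single_apply, apply_ite ι]
  have hce := hι ▸ (reach_single_posO hC hr hqc hc f).map ι
  exact ((hbb₁.trans hb₁c).trans hce).mono (by lia)

end Columns

section Matrices

variable {R : Type*} [CommRing R] {r : ℕ}

theorem span_range_mulVec_single_eq_top {κ : Type*} [Fintype κ] [DecidableEq κ]
    {g : Matrix κ κ R} (hg : IsUnit g) (k : κ) :
    Ideal.span (Set.range (g *ᵥ Pi.single k 1)) = ⊤ := by
  obtain ⟨g', hg'⟩ := hg.exists_left_inv
  refine (Ideal.eq_top_iff_one _).2 (span_range_mulVec_le g' _ (Ideal.subset_span ⟨k, ?_⟩))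
  rw [mulVec_mulVec, hg', one_mulVec, Pi.single_eq_same]

theorem mulVec_apply_negO_of_mulVec_single {g : Matrix (Fin (2 * r + 1)) (Fin (2 * r + 1)) R}
    (hg : g ∈ OO r R) {k : Fin (2 * r + 1)} (hk : k ≠ midO r)
    (h : g *ᵥ Pi.single k 1 = Pi.single k 1) (x : Fin (2 * r + 1) → R) :
    (g *ᵥ x) (negO r k) = x (negO r k) := by
  have hq := hg.2 (x + Pi.single k 1)
  rw [mulVec_add, h, quadO_add_single hk, quadO_add_single hk, hg.2, one_mul, one_mul] at hq
  exact add_left_cancel hq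

theorem exists_mem_EOO_mul_mulVec_single {g : Matrix (Fin (2 * r + 1)) (Fin (2 * r + 1)) R}
    (hg : g ∈ OO r R) {k : Fin (2 * r + 1)} (hk : k ≠ midO r) {N : ℕ}
    (h : Reach N (g *ᵥ Pi.single k 1) (Pi.single k 1)) :
    ∃ E ∈ EOO r (N + (2 * r - 1)) R, (E * g) *ᵥ Pi.single k 1 = Pi.single k 1 ∧
      (E * g) *ᵥ Pi.single (negO r k) 1 = Pi.single (negO r k) 1 := by
  obtain ⟨E, hE, hEk⟩ := h
  rw [mulVec_mulVec] at hEk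
  have hEg := mul_mem_OO_of_mem_EOO hE hg
  have hk' := negO_ne_midO hk
  obtain ⟨E', hE', hneg, hpos⟩ :=
    exists_mem_EOO_mulVec_eq_single (b := (E * g) *ᵥ Pi.single (negO r k) 1)
      (by rw [hEg.2, quadO_single hk']) hk'
      (by rw [mulVec_apply_negO_of_mulVec_single hEg hk hEk, Pi.single_eq_same])
  rw [negO_negO] at hpos
  refine ⟨E' * E, EOO_mono (add_comm _ _).le (mul_mem_EOO hE' hE), ?_, ?_⟩
  · rw [mul_assoc, ← mulVec_mulVec, hEk, hpos]
  · rw [mul_assoc, ← mulVec_mulVec, hneg]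

theorem submatrix_mul_of_forall_notMem_range {ι κ : Type*} [Fintype ι] [Fintype κ] {e : ι → κ}
    (he : e.Injective) (g : Matrix κ κ R) {h : Matrix κ κ R}
    (hh : ∀ k ∉ Set.range e, ∀ j, h k (e j) = 0) :
    (g * h).submatrix e e = g.submatrix e e * h.submatrix e e := by
  ext i j
  exact (Fintype.sum_of_injective e he _ _ (fun k hk => mul_eq_zero_of_right _ (hh k hk j))
    fun _ => rfl).symm

theorem submatrix_mulVec_of_forall_notMem_range {ι κ : Type*} [Fintype ι] [Fintype κ] {e : ι → κ}
    (he : e.Injective) (g : Matrix κ κ R) {x : κ → R} (hx : ∀ k ∉ Set.range e, x k = 0) :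
    g.submatrix e e *ᵥ (x ∘ e) = (g *ᵥ x) ∘ e := by
  ext i
  exact Fintype.sum_of_injective e he _ _ (fun k hk => by rw [hx k hk, mul_zero]) fun _ => rfl

/-- The inclusion of the index set `2,…,r,0,−r,…,−2` of `R^{2r-1}` into that of `R^{2r+1}`. -/
def innerIndex (hr : 1 ≤ r) (i : Fin (2 * (r - 1) + 1)) : Fin (2 * r + 1) :=
  ⟨i.val + 1, by omega⟩

theorem innerIndex_injective (hr : 1 ≤ r) : (innerIndex hr).Injective := fun i j hij => by
  simpa [innerIndex, Fin.ext_iff] using hij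

theorem notMem_range_innerIndex {hr : 1 ≤ r} {k : Fin (2 * r + 1)} :
    k ∉ Set.range (innerIndex hr) ↔ k = posO ⟨0, hr⟩ ∨ k = negO r (posO ⟨0, hr⟩) := by
  simp only [Set.mem_range, innerIndex, posO, negO, Fin.ext_iff]
  refine ⟨fun h => ?_, fun h ⟨i, hi⟩ => by lia⟩
  by_contra! hk
  exact h ⟨⟨k - 1, by lia⟩, by simp only; lia⟩

theorem quadO_comp_innerIndex (hr : 1 ≤ r) {x : Fin (2 * r + 1) → R} (hx : x (posO ⟨0, hr⟩) = 0) :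
    quadO (r - 1) (x ∘ innerIndex hr) = quadO r x := by
  obtain ⟨s, rfl⟩ : ∃ s, r = s + 1 := ⟨r - 1, by lia⟩
  have hx₀ : x (posO 0) = 0 := hx
  rw [quadO_eq x, Fin.sum_univ_succ, hx₀, zero_mul, zero_add]
  refine congrArg₂ (· + ·) rfl (Finset.sum_congr rfl fun i _ => congrArg₂ (· * ·) rfl ?_)
  exact congrArg x (Fin.ext (by simp [innerIndex, negO, posO]; lia))

theorem submatrix_innerIndex_mem_OO (hr : 1 ≤ r)
    {g : Matrix (Fin (2 * r + 1)) (Fin (2 * r + 1)) R} (hg : g ∈ OO r R)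
    (hrow : ∀ k ∉ Set.range (innerIndex hr), ∀ x, (g *ᵥ x) k = x k) :
    g.submatrix (innerIndex hr) (innerIndex hr) ∈ OO (r - 1) R := by
  have hinj := innerIndex_injective hr
  have hmem : posO ⟨0, hr⟩ ∉ Set.range (innerIndex hr) := notMem_range_innerIndex.2 (.inl rfl)
  constructor
  · obtain ⟨g', hg'⟩ := hg.1.exists_left_inv
    refine IsUnit.of_mul_eq_one_right (g'.submatrix (innerIndex hr) (innerIndex hr)) ?_
    rw [← submatrix_mul_of_forall_notMem_range hinj g' fun k hk j => ?_, hg',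
      submatrix_one _ hinj]
    have hkj := hrow k hk (Pi.single (innerIndex hr j) 1)
    rwa [mulVec_single_one, Pi.single_eq_of_ne fun h => hk ⟨j, h.symm⟩] at hkj
  · intro y
    set x := Function.extend (innerIndex hr) y 0
    have hx₀ : ∀ k ∉ Set.range (innerIndex hr), x k = 0 :=
      fun k hk => Function.extend_apply' _ _ _ hk
    have hxy : x ∘ innerIndex hr = y := funext fun i => hinj.extend_apply _ _ _
    rw [← hxy, submatrix_mulVec_of_forall_notMem_range hinj g hx₀,
      quadO_comp_innerIndex hr (by rw [hrow _ hmem, hx₀ _ hmem]), hg.2,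
      quadO_comp_innerIndex hr (hx₀ _ hmem)]

/-- `g = diag(1, β, 1)`, the block `β` occupying the rows and columns `2,…,r,0,−r,…,−2`. -/
def IsInnerBlock (hr : 1 ≤ r) (g : Matrix (Fin (2 * r + 1)) (Fin (2 * r + 1)) R)
    (β : Matrix (Fin (2 * (r - 1) + 1)) (Fin (2 * (r - 1) + 1)) R) : Prop :=
  g ⟨0, by omega⟩ ⟨0, by omega⟩ = 1 ∧
  g ⟨2 * r, by omega⟩ ⟨2 * r, by omega⟩ = 1 ∧
  (∀ j : Fin (2 * r + 1), j.val ≠ 0 → g ⟨0, by omega⟩ j = 0 ∧ g j ⟨0, by omega⟩ = 0) ∧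
  (∀ j : Fin (2 * r + 1), j.val ≠ 2 * r →
    g ⟨2 * r, by omega⟩ j = 0 ∧ g j ⟨2 * r, by omega⟩ = 0) ∧
  ∀ i j : Fin (2 * (r - 1) + 1), g ⟨i.val + 1, by omega⟩ ⟨j.val + 1, by omega⟩ = β i j

theorem exists_isInnerBlock (hr : 1 ≤ r) {g : Matrix (Fin (2 * r + 1)) (Fin (2 * r + 1)) R}
    (hg : g ∈ OO r R) (hpos : g *ᵥ Pi.single (posO ⟨0, hr⟩) 1 = Pi.single (posO ⟨0, hr⟩) 1)
    (hneg : g *ᵥ Pi.single (negO r (posO ⟨0, hr⟩)) 1 = Pi.single (negO r (posO ⟨0, hr⟩)) 1) :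
    ∃ β ∈ OO (r - 1) R, IsInnerBlock hr g β := by
  have hcol : ∀ k ∉ Set.range (innerIndex hr), ∀ j, g j k = (1 : Matrix _ _ R) j k := by
    intro k hk j
    obtain rfl | rfl := notMem_range_innerIndex.1 hk
    · simpa [one_apply, Pi.single_apply] using congrFun hpos j
    · simpa [one_apply, Pi.single_apply] using congrFun hneg j
  have hrow : ∀ k ∉ Set.range (innerIndex hr), ∀ x, (g *ᵥ x) k = x k := by
    intro k hk x
    obtain rfl | rfl := notMem_range_innerIndex.1 hk
    · simpa only [negO_negO] using
        mulVec_apply_negO_of_mulVec_single hg (negO_ne_midO (posO_ne_midO _)) hneg x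
    · exact mulVec_apply_negO_of_mulVec_single hg (posO_ne_midO _) hpos x
  have hrow' : ∀ k ∉ Set.range (innerIndex hr), ∀ j, g k j = (1 : Matrix _ _ R) k j := by
    intro k hk j
    simpa [one_apply, Pi.single_apply] using hrow k hk (Pi.single j 1)
  have hfirst : (⟨0, by lia⟩ : Fin (2 * r + 1)) ∉ Set.range (innerIndex hr) :=
    notMem_range_innerIndex.2 (.inl rfl)
  have hlast : (⟨2 * r, by lia⟩ : Fin (2 * r + 1)) ∉ Set.range (innerIndex hr) :=
    notMem_range_innerIndex.2 (.inr rfl)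
  refine ⟨_, submatrix_innerIndex_mem_OO hr hg hrow, ?_, ?_, fun j hj => ⟨?_, ?_⟩,
    fun j hj => ⟨?_, ?_⟩, fun i j => rfl⟩
  · rw [hcol _ hfirst, one_apply_eq]
  · rw [hcol _ hlast, one_apply_eq]
  · rw [hrow' _ hfirst, one_apply_ne (Fin.ne_of_val_ne hj.symm)]
  · rw [hcol _ hfirst, one_apply_ne (Fin.ne_of_val_ne hj)]
  · rw [hrow' _ hlast, one_apply_ne (Fin.ne_of_val_ne hj.symm)]
  · rw [hcol _ hlast, one_apply_ne (Fin.ne_of_val_ne hj)]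

end Matrices

theorem linear_bound_le_quadratic_bound {n D r : ℕ} (hr : max 3 (D + 2) ≤ r) :
    (n + D + 1) * (8 * r + 4) + 12 * r - 10 ≤ n * (12 * r - 8) +
      (n * D + r * (r - 1) / 2) * (r * (r - 1) / 2 + (r - 1 + 1) / 2 + 9 * r - 2) + 11 * r - 9 := by
  have hT : r ≤ r * (r - 1) / 2 := by
    rw [Nat.le_div_iff_mul_le two_pos]
    exact Nat.mul_le_mul_left r (by lia)
  have hn : n * (8 * r + 4) ≤ n * (12 * r - 8) := Nat.mul_le_mul_left n (by lia)
  have hD : r * (8 * r + 5) ≤ (n * D + r * (r - 1) / 2) *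
      (r * (r - 1) / 2 + (r - 1 + 1) / 2 + 9 * r - 2) :=
    Nat.mul_le_mul (hT.trans (Nat.le_add_left _ _)) (by lia)
  have hDr : (D + 1 + 1) * (8 * r + 4) ≤ r * (8 * r + 4) := Nat.mul_le_mul_right _ (by lia)
  lia

end OddOrthogonal

open OddOrthogonal in
theorem odd_matrix_bounded_reduction_general {C : Type*} [CommRing C] [IsNoetherianRing C]
    {n D : ℕ} (hdim : ringKrullDim C ≤ D) {r : ℕ} (hr : max 3 (D + 2) ≤ r)
    {g : Matrix (Fin (2 * r + 1)) (Fin (2 * r + 1)) (MvPolynomial (Fin n) C)}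
    (hg : g ∈ OO r (MvPolynomial (Fin n) C)) :
    ∃ E ∈ EOO r ((n + D + 1) * (8 * r + 4) + 12 * r - 10) (MvPolynomial (Fin n) C),
      ∃ β ∈ OO (r - 1) (MvPolynomial (Fin n) C),
        IsInnerBlock (show 1 ≤ r by omega) (E * g) β := by
  obtain ⟨h3, hD⟩ := max_le_iff.1 hr
  let first : Fin r := ⟨0, by lia⟩
  have hfirst := posO_ne_midO first
  have hcol := reach_single_posO_mvPolynomial hdim h3 hD
    (by rw [hg.2, quadO_single hfirst]) (span_range_mulVec_single_eq_top hg.1 (posO first)) first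
  obtain ⟨E, hE, hpos, hneg⟩ := exists_mem_EOO_mul_mulVec_single hg hfirst hcol
  exact ⟨E, EOO_mono (by lia) hE,
    exists_isInnerBlock (by lia) (mul_mem_OO_of_mem_EOO hE hg) hpos hneg⟩

/-- Bounded reduction for the odd split orthogonal group over a polynomial ring:
any `g ∈ O(2r+1, C[x_1,…,x_n])` can be reduced by at most
`N = n(12r−8) + (nD + r(r−1)/2)(r(r−1)/2 + ⌈(r−1)/2⌉ + 9r−2) + 11r−9`
elementary orthogonal transvections (multiplied from the left) to `diag(1, β, 1)`
with `β ∈ O(2r−1, C[x_1,…,x_n])`. -/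
theorem odd_matrix_bounded_reduction
    (C : Type*) [CommRing C] [IsNoetherianRing C] (n D : ℕ)
    (hdim : ringKrullDim C = (D : WithBot ℕ∞))
    (r : ℕ) (hr : max 3 (D + 2) ≤ r)
    (g : Matrix (Fin (2 * r + 1)) (Fin (2 * r + 1)) (MvPolynomial (Fin n) C))
    (hg : g ∈ OO r (MvPolynomial (Fin n) C)) :
    ∃ E ∈ EOO r
        (n * (12 * r - 8) +
          (n * D + r * (r - 1) / 2) * (r * (r - 1) / 2 + (r - 1 + 1) / 2 + 9 * r - 2) +
            11 * r - 9)
        (MvPolynomial (Fin n) C),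
      ∃ β ∈ OO (r - 1) (MvPolynomial (Fin n) C),
        (E * g) ⟨0, by omega⟩ ⟨0, by omega⟩ = 1 ∧
        (E * g) ⟨2 * r, by omega⟩ ⟨2 * r, by omega⟩ = 1 ∧
        (∀ j : Fin (2 * r + 1), j.val ≠ 0 →
          (E * g) ⟨0, by omega⟩ j = 0 ∧ (E * g) j ⟨0, by omega⟩ = 0) ∧
        (∀ j : Fin (2 * r + 1), j.val ≠ 2 * r →
          (E * g) ⟨2 * r, by omega⟩ j = 0 ∧ (E * g) j ⟨2 * r, by omega⟩ = 0) ∧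
        ∀ i j : Fin (2 * (r - 1) + 1),
          (E * g) ⟨i.val + 1, by omega⟩ ⟨j.val + 1, by omega⟩ = β i j := by
  obtain ⟨E, hE, hblock⟩ := odd_matrix_bounded_reduction_general hdim.le hr hg
  exact ⟨E, OddOrthogonal.EOO_mono (OddOrthogonal.linear_bound_le_quadratic_bound hr) hE, hblock⟩
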